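/- arXiv:2110.08237 — 12 statements merged into one kernel-verified Lean document; each statement's English description precedes it below -/
import Mathlib

section
/- Let R be a commutative ring and let A and B be quasi-modules over R. Then the tensor product A ⊗_R B (formed using the right R-module structure of A and the left R-module structure of B, and regarded as an R-R-bimodule via the left R-action on A and the right R-action on B) is again a quasi-module over R. -/
/-!
STATEMENT 0. Quasi-modules over a commutative ring `R`: an `R`-`R`-bimodule is an abelian
group `A` equipped with two commuting `R`-module structures (since `R` is commutative, a right
`R`-module structure is just another `R`-module structure).  The filtration
`F₀A ⊆ F₁A ⊆ ⋯` is defined by `F₋₁A = 0` and `a ∈ FₙA` iff `r•a − a•r ∈ Fₙ₋₁A` for all `r`,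
and `A` is a quasi-module iff `A = ⋃ₙ FₙA`.  The theorem: if `A` and `B` are quasi-modules,
then `A ⊗[R] B` (formed using the right structure of `A` and the left structure of `B`, and
equipped with left action through `A` and right action through `B`) is a quasi-module.
-/

/-- The scalar multiplication given by an explicitly specified module structure. -/
def ModSMul {R A : Type*} [Semiring R] [AddCommMonoid A] (m : Module R A) (r : R) (a : A) : A :=
  letI := m
  r • a

/-- The quasi-module filtration `F₀A ⊆ F₁A ⊆ ⋯` attached to a pair of `R`-module structures on
`A` (`l` giving the left action `r • a`, and `r` the right action `a • r`):  an element `a`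
belongs to `quasiFil l r 0` iff `s•a - a•s = 0` for all `s : R` (i.e. lies in `F₋₁A = 0`), and
`a ∈ quasiFil l r (n+1)` iff `s•a - a•s ∈ quasiFil l r n` for all `s : R`. -/
def quasiFil {R A : Type*} [CommRing R] [AddCommGroup A] (l r : Module R A) : ℕ → Set A
  | 0 => {a | ∀ s : R, ModSMul l s a - ModSMul r s a = 0}
  | n + 1 => {a | ∀ s : R, ModSMul l s a - ModSMul r s a ∈ quasiFil l r n}

/-- An `R`-`R`-bimodule, given by the pair of module structures `(l, r)`, is a *quasi-module*
if its quasi-module filtration is exhaustive: `A = ⋃ₙ FₙA`. -/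
def IsQuasiModule {R A : Type*} [CommRing R] [AddCommGroup A] (l r : Module R A) : Prop :=
  ∀ a : A, ∃ n : ℕ, a ∈ quasiFil l r n

theorem quasiFil_zero_mem {R A : Type*} [CommRing R] [AddCommGroup A] (l r : Module R A) (n : ℕ) :
    (0 : A) ∈ quasiFil l r n := by
  have h : ∀ (m : Module R A) (s : R), ModSMul m s (0 : A) = 0 := fun m s => by
    unfold ModSMul; exact smul_zero s
  induction n with
  | zero => intro s; rw [h, h, sub_zero]
  | succ n ih => intro s; rw [h, h, sub_zero]; exact ih

theorem quasiFil_add_mem {R A : Type*} [CommRing R] [AddCommGroup A] (l r : Module R A) (n : ℕ) :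
    ∀ a b : A, a ∈ quasiFil l r n → b ∈ quasiFil l r n → a + b ∈ quasiFil l r n := by
  have h : ∀ (m : Module R A) (s : R) (a b : A),
      ModSMul m s (a + b) = ModSMul m s a + ModSMul m s b := fun m s a b => by
    unfold ModSMul; exact smul_add s a b
  induction n with
  | zero =>
    intro a b ha hb s
    rw [h, h, add_sub_add_comm, ha s, hb s, add_zero]
  | succ n ih =>
    intro a b ha hb s
    rw [h, h, add_sub_add_comm]
    exact ih _ _ (ha s) (hb s)

theorem quasiFil_le {R A : Type*} [CommRing R] [AddCommGroup A] (l r : Module R A) {m n : ℕ}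
    (hmn : m ≤ n) : quasiFil l r m ⊆ quasiFil l r n := by
  have key : ∀ n : ℕ, quasiFil l r n ⊆ quasiFil l r (n + 1) := by
    intro n
    induction n with
    | zero =>
      intro a ha s
      rw [ha s]
      exact quasiFil_zero_mem l r 0
    | succ n ih => exact fun a ha s => ih (ha s)
  exact monotone_nat_of_le_succ (f := quasiFil l r) key hmn

theorem quasiFil_biadditive {R A B T : Type*} [CommRing R] [AddCommGroup A] [AddCommGroup B]
    [AddCommGroup T] (lA rA : Module R A) (lB rB : Module R B) (lT rT : Module R T)
    (f : A → B → T) (hz : ∀ b, f 0 b = 0) (hz' : ∀ a, f a 0 = 0)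
    (hd : ∀ s a b, ModSMul lT s (f a b) - ModSMul rT s (f a b) =
      f (ModSMul lA s a - ModSMul rA s a) b + f a (ModSMul lB s b - ModSMul rB s b))
    (m : ℕ) : ∀ (n : ℕ) (a : A) (b : B), a ∈ quasiFil lA rA m → b ∈ quasiFil lB rB n →
      f a b ∈ quasiFil lT rT (m + n) := by
  induction m with
  | zero =>
    intro n
    induction n with
    | zero =>
      intro a b ha hb s
      rw [hd, ha s, hb s, hz, hz', add_zero]
    | succ n ih =>
      intro a b ha hb s
      rw [hd, ha s, hz, zero_add]
      exact ih _ _ ha (hb s)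
  | succ m ihm =>
    intro n
    induction n with
    | zero =>
      intro a b ha hb s
      rw [hd, hb s, hz', add_zero]
      exact ihm 0 _ _ (ha s) hb
    | succ n ih =>
      intro a b ha hb s
      rw [hd]
      refine quasiFil_add_mem lT rT _ _ _ ?_ (ih _ _ ha (hb s))
      exact quasiFil_le lT rT (show m + (n + 1) ≤ (m + 1) + n by omega) (ihm (n + 1) _ _ (ha s) hb)

theorem ModSMul_balanced {R A B : Type*} [CommRing R] [AddCommGroup A] [AddCommGroup B]
    (rA : Module R A) (lB : Module R B) (s : R) (a : A) (b : B) :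
    TensorProduct.tmul R (ModSMul rA s a) b = TensorProduct.tmul R a (ModSMul lB s b) := by
  unfold ModSMul
  exact TensorProduct.smul_tmul s a b

/-- Let `R` be a commutative ring and `A`, `B` quasi-modules over `R`
(with commuting left and right actions `lA, rA` resp. `lB, rB`).  Then the tensor product
`A ⊗[R] B`, formed using the right `R`-module structure `rA` of `A` and the left `R`-module
structure `lB` of `B`, and regarded as an `R`-`R`-bimodule via the left `R`-action through `A`
(the structure `lT`, characterized on pure tensors by `r • (a ⊗ b) = (r • a) ⊗ b`) and the
right `R`-action through `B` (the structure `rT`, characterized by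
`(a ⊗ b) • r = a ⊗ (b • r)`), is again a quasi-module over `R`. -/
theorem isQuasiModule_tensorProduct
    {R A B : Type*} [CommRing R] [AddCommGroup A] [AddCommGroup B]
    (lA rA : Module R A) (lB rB : Module R B)
    (hA : ∀ (r s : R) (a : A), ModSMul lA r (ModSMul rA s a) = ModSMul rA s (ModSMul lA r a))
    (hB : ∀ (r s : R) (b : B), ModSMul lB r (ModSMul rB s b) = ModSMul rB s (ModSMul lB r b))
    (hAq : IsQuasiModule lA rA) (hBq : IsQuasiModule lB rB)
    (lT rT : Module R (@TensorProduct R _ A B _ _ rA lB))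
    (hT : ∀ (r s : R) (x : @TensorProduct R _ A B _ _ rA lB),
      ModSMul lT r (ModSMul rT s x) = ModSMul rT s (ModSMul lT r x))
    (hlT : ∀ (r : R) (a : A) (b : B),
      ModSMul lT r (@TensorProduct.tmul R _ A B _ _ rA lB a b) =
        @TensorProduct.tmul R _ A B _ _ rA lB (ModSMul lA r a) b)
    (hrT : ∀ (r : R) (a : A) (b : B),
      ModSMul rT r (@TensorProduct.tmul R _ A B _ _ rA lB a b) =
        @TensorProduct.tmul R _ A B _ _ rA lB a (ModSMul rB r b)) :
    IsQuasiModule lT rT := by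
  intro x
  refine @TensorProduct.induction_on R _ A B _ _ rA lB
    (fun x => ∃ n, x ∈ quasiFil lT rT n) x ⟨0, quasiFil_zero_mem lT rT 0⟩ ?_ ?_
  · intro a b
    obtain ⟨m, hm⟩ := hAq a
    obtain ⟨n, hn⟩ := hBq b
    refine ⟨m + n, quasiFil_biadditive lA rA lB rB lT rT
      (fun a b => @TensorProduct.tmul R _ A B _ _ rA lB a b)
      (fun b => @TensorProduct.zero_tmul R _ A B _ _ rA lB b)
      (fun a => @TensorProduct.tmul_zero R _ A B _ _ rA lB a) ?_ m n a b hm hn⟩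
    intro s a b
    have hbal : @TensorProduct.tmul R _ A B _ _ rA lB (ModSMul rA s a) b =
        @TensorProduct.tmul R _ A B _ _ rA lB a (ModSMul lB s b) :=
      ModSMul_balanced rA lB s a b
    have h1 := @TensorProduct.sub_tmul R _ A B _ _ rA lB (ModSMul lA s a) (ModSMul rA s a) b
    have h2 := @TensorProduct.tmul_sub R _ A B _ _ rA lB a (ModSMul lB s b) (ModSMul rB s b)
    beta_reduce
    rw [hlT, hrT, h1, h2, hbal, sub_add_sub_cancel]
  · rintro x y ⟨m, hm⟩ ⟨n, hn⟩
    exact ⟨max m n, quasiFil_add_mem lT rT _ _ _ (quasiFil_le lT rT (le_max_left m n) hm)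
      (quasiFil_le lT rT (le_max_right m n) hn)⟩
end

section
/- Let σ : R → S be a flat epimorphism of commutative rings and let A be a quasi-module over R. Then the two canonical maps induced by σ, namely S ⊗_R A → S ⊗_R A ⊗_R S, s ⊗ a ↦ s ⊗ a ⊗ 1, and A ⊗_R S → S ⊗_R A ⊗_R S, a ⊗ s ↦ 1 ⊗ a ⊗ s, are bijective. -/
open TensorProduct

namespace QM

/-- filtration -/
def fil {R C : Type*} [AddCommGroup C] (D : R → AddMonoid.End C) : ℕ → AddSubgroup C
  | 0 => ⊥
  | n + 1 => ⨅ s, (fil D n).comap (D s)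

theorem mem_fil_succ {R C : Type*} [AddCommGroup C] (D : R → AddMonoid.End C) (n : ℕ) (x : C) :
    x ∈ fil D (n+1) ↔ ∀ s, D s x ∈ fil D n := by
  simp only [fil, AddSubgroup.mem_iInf]
  rfl

theorem fil_mono {R C : Type*} [AddCommGroup C] (D : R → AddMonoid.End C) :
    Monotone (fil D) := by
  apply monotone_nat_of_le_succ
  intro n
  induction n with
  | zero => exact bot_le
  | succ n ih =>
    intro x hx
    rw [mem_fil_succ] at hx ⊢
    exact fun s => ih (hx s)

theorem fil_neg {R C : Type*} [AddCommGroup C] (D D' : R → AddMonoid.End C)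
    (h : ∀ s x, D' s x = - D s x) (n : ℕ) (x : C) (hx : x ∈ fil D n) : x ∈ fil D' n := by
  induction n generalizing x with
  | zero => exact hx
  | succ n ih =>
    rw [mem_fil_succ] at hx ⊢
    intro s
    rw [h]
    exact neg_mem (ih _ (hx s))

theorem fil_map {R C C' : Type*} [AddCommGroup C] [AddCommGroup C'] (D : R → AddMonoid.End C)
    (D' : R → AddMonoid.End C') (h : C →+ C') (hh : ∀ s x, h (D s x) = D' s (h x))
    (n : ℕ) (x : C) (hx : x ∈ fil D n) : h x ∈ fil D' n := by
  induction n generalizing x with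
  | zero =>
    have : x = 0 := hx
    subst this
    rw [map_zero]; exact zero_mem _
  | succ n ih =>
    rw [mem_fil_succ] at hx ⊢
    intro s
    rw [← hh]
    exact ih _ (hx s)

theorem fil_add {R C : Type*} [AddCommGroup C] (D : R → AddMonoid.End C) {x y : C}
    (hx : ∃ n, x ∈ fil D n) (hy : ∃ n, y ∈ fil D n) : ∃ n, x + y ∈ fil D n := by
  obtain ⟨n, hn⟩ := hx
  obtain ⟨k, hk⟩ := hy
  exact ⟨max n k, add_mem (fil_mono D (le_max_left _ _) hn) (fil_mono D (le_max_right _ _) hk)⟩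

theorem sub_app {C : Type*} [AddCommGroup C] (a b : AddMonoid.End C) (x : C) :
    (a - b) x = a x - b x := rfl

theorem fil_map' {R C C' : Type*} [AddCommGroup C] [AddCommGroup C'] {l r : R → AddMonoid.End C}
    {l' r' : R → AddMonoid.End C'} (h : C →+ C') (hl : ∀ s x, h (l s x) = l' s (h x))
    (hr : ∀ s x, h (r s x) = r' s (h x)) {x : C} (hx : ∃ n, x ∈ fil (fun s => l s - r s) n) :
    ∃ n, h x ∈ fil (fun s => l' s - r' s) n := by
  obtain ⟨n, hn⟩ := hx
  refine ⟨n, fil_map _ _ h ?_ n x hn⟩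
  intro s x
  rw [sub_app, sub_app, map_sub, hl, hr]

theorem swap {R C : Type*} [CommRing R] [AddCommGroup C] (l r : R →+* AddMonoid.End C)
    (hlr : ∀ s t x, l s (r t x) = r t (l s x)) (P : AddSubgroup C)
    (hPl : ∀ s, ∀ x ∈ P, l s x ∈ P) (hPr : ∀ s, ∀ x ∈ P, r s x ∈ P) (I : Ideal R)
    (n : ℕ) (x : C) (hx : x ∈ fil (fun s => l s - r s) n) (hI : ∀ i ∈ I, l i x ∈ P) :
    ∀ i ∈ I ^ n, r i x ∈ P := by
  induction n generalizing x with
  | zero =>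
    have : x = 0 := hx
    subst this
    intro i _
    rw [map_zero]; exact zero_mem _
  | succ n ih =>
    intro i hi
    rw [pow_succ] at hi
    rw [mem_fil_succ] at hx
    induction hi using Submodule.mul_induction_on' with
    | mem_mul_mem j hj i hi =>
      rw [map_mul]
      have e1 : r i x = l i x - (l i - r i) x := by
        rw [sub_app]; abel
      have e2 : (r j * r i) x = r j (l i x) - r j ((l i - r i) x) := by
        rw [← map_sub, ← e1]; rfl
      rw [e2]
      refine sub_mem (hPr _ _ (hI i hi)) (ih _ (hx i) ?_ j hj)
      intro k hk
      have e3 : l k ((l i - r i) x) = l i (l k x) - r i (l k x) := by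
        rw [sub_app, map_sub, hlr]
        congr 1
        change (l k * l i) x = (l i * l k) x
        rw [← map_mul, mul_comm, map_mul]
      rw [e3]
      exact sub_mem (hPl _ _ (hI k hk)) (hPr _ _ (hI k hk))
    | add a _ b _ ha hb =>
      rw [map_add]
      exact add_mem ha hb

theorem swap' {R C : Type*} [CommRing R] [AddCommGroup C] (l r : R →+* AddMonoid.End C)
    (hlr : ∀ s t x, l s (r t x) = r t (l s x)) (P : AddSubgroup C)
    (hPl : ∀ s, ∀ x ∈ P, l s x ∈ P) (hPr : ∀ s, ∀ x ∈ P, r s x ∈ P) (I : Ideal R)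
    (n : ℕ) (x : C) (hx : x ∈ fil (fun s => l s - r s) n) (hI : ∀ i ∈ I, r i x ∈ P) :
    ∀ i ∈ I ^ n, l i x ∈ P :=
  swap r l (fun s t x => (hlr t s x).symm) P hPr hPl I n x
    (fil_neg _ _ (fun s x => by simp only [sub_app]; abel) n x hx) hI

section gab
variable {R S : Type*} [CommRing R] [CommRing S] [Algebra R S]

theorem gab_pow {I : Ideal R} (h : I.map (algebraMap R S) = ⊤) (n : ℕ) :
    (I ^ n).map (algebraMap R S) = ⊤ := by
  rw [Ideal.map_pow, h, Ideal.top_pow]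

theorem gab_mul {I J : Ideal R} (h : I.map (algebraMap R S) = ⊤)
    (h' : J.map (algebraMap R S) = ⊤) : (I * J).map (algebraMap R S) = ⊤ := by
  rw [Ideal.map_mul, h, h', Ideal.top_mul]

theorem gab_mem {C : Type*} [AddCommGroup C] (ρ : S →+* AddMonoid.End C) (P : AddSubgroup C)
    (hP : ∀ s, ∀ x ∈ P, ρ s x ∈ P) (I : Ideal R) (h : I.map (algebraMap R S) = ⊤) (x : C)
    (hx : ∀ i ∈ I, ρ (algebraMap R S i) x ∈ P) : x ∈ P := by
  have key : ∀ t ∈ I.map (algebraMap R S), ρ t x ∈ P := by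
    intro t ht
    rw [Ideal.map] at ht
    induction ht using Submodule.span_induction with
    | mem t ht => obtain ⟨i, hi, rfl⟩ := ht; exact hx i hi
    | zero => rw [map_zero]; exact zero_mem _
    | add a b _ _ ha hb => rw [map_add]; exact add_mem ha hb
    | smul a b _ hb => rw [smul_eq_mul, map_mul]; exact hP _ _ hb
  have := key 1 (h ▸ Submodule.mem_top)
  rwa [map_one] at this

/-- the scalar action of S on a tensor product -/
def leftAct (R S : Type*) [CommRing R] [CommRing S] [Algebra R S] (M : Type*) [AddCommGroup M]
    [Module R M] : S →+* AddMonoid.End (S ⊗[R] M) := Module.toAddMonoidEnd S (S ⊗[R] M)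

theorem L1 [Module.Flat R S] {M : Type*} [AddCommGroup M] [Module R M] (x : M)
    (hx : (1 : S) ⊗ₜ[R] x = 0) :
    Ideal.map (algebraMap R S) (LinearMap.ker (LinearMap.toSpanSingleton R M x)) = ⊤ := by
  set K : Ideal R := LinearMap.ker (LinearMap.toSpanSingleton R M x) with hK
  have ex : Function.Exact (Submodule.subtype K) (LinearMap.toSpanSingleton R M x) :=
    LinearMap.exact_subtype_ker_map _
  have ex2 := Module.Flat.lTensor_exact S ex
  have h1 : LinearMap.lTensor S (LinearMap.toSpanSingleton R M x) ((1:S) ⊗ₜ[R] (1:R)) = 0 := by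
    simpa using hx
  obtain ⟨w, hw⟩ := (ex2 _).1 h1
  have key : ∀ w : S ⊗[R] K, TensorProduct.rid R S (LinearMap.lTensor S (Submodule.subtype K) w) ∈
      K.map (algebraMap R S) := by
    intro w
    induction w using TensorProduct.induction_on with
    | zero => simp
    | tmul s k =>
      simp only [LinearMap.lTensor_tmul, TensorProduct.rid_tmul, Algebra.smul_def]
      exact Ideal.mul_mem_right _ _ (Ideal.mem_map_of_mem _ k.2)
    | add a b ha hb => rw [map_add, map_add]; exact add_mem ha hb
  have := key w
  rw [hw] at this
  rw [Ideal.eq_top_iff_one]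
  simpa using this

theorem L2 [Module.Flat R S] (hepi : Function.Bijective (LinearMap.mul' R S)) (s : S) :
    ∃ I : Ideal R, I.map (algebraMap R S) = ⊤ ∧ ∀ i ∈ I, ∃ t : R, i • s = algebraMap R S t := by
  let T : Submodule R S := LinearMap.range (Algebra.linearMap R S)
  refine ⟨_, L1 (R := R) (S := S) (T.mkQ s) ?_, ?_⟩
  · have h : (1 : S) ⊗ₜ[R] s = s ⊗ₜ[R] (1:S) := hepi.1 (by simp)
    have h2 := congrArg (LinearMap.lTensor S T.mkQ) h
    rw [LinearMap.lTensor_tmul, LinearMap.lTensor_tmul] at h2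
    rw [h2]
    have : T.mkQ (1:S) = 0 := by
      rw [Submodule.mkQ_apply, Submodule.Quotient.mk_eq_zero]
      exact ⟨1, by simp⟩
    rw [this, tmul_zero]
  · intro i hi
    rw [LinearMap.mem_ker, LinearMap.toSpanSingleton_apply, ← map_smul, Submodule.mkQ_apply,
      Submodule.Quotient.mk_eq_zero] at hi
    obtain ⟨t, ht⟩ := hi
    exact ⟨t, by simpa using ht.symm⟩

theorem L3 [Module.Flat R S] {M N : Type*} [AddCommGroup M] [Module R M] [AddCommGroup N]
    [Module R N] (φ : M →ₗ[R] N)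
    (hker : ∀ x, φ x = 0 → ∃ I : Ideal R, I.map (algebraMap R S) = ⊤ ∧ ∀ i ∈ I, i • x = 0)
    (hcok : ∀ y, ∃ I : Ideal R, I.map (algebraMap R S) = ⊤ ∧ ∀ i ∈ I, ∃ x, i • y = φ x) :
    Function.Bijective (LinearMap.lTensor S φ) := by
  constructor
  · rw [injective_iff_map_eq_zero]
    intro z hz
    have ex := Module.Flat.lTensor_exact S (LinearMap.exact_subtype_ker_map φ)
    obtain ⟨w, rfl⟩ := (ex z).1 hz
    suffices h : w = 0 by rw [h, map_zero]
    clear hz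
    induction w using TensorProduct.induction_on with
    | zero => rfl
    | tmul s k =>
      obtain ⟨I, hI, h⟩ := hker k.1 k.2
      refine gab_mem (leftAct R S _) ⊥ ?_ I hI _ ?_
      · intro s x hx
        have : x = 0 := hx
        subst this
        rw [map_zero]; exact zero_mem _
      · intro i hi
        change algebraMap R S i • (s ⊗ₜ[R] k) = 0
        have : i • k = 0 := Subtype.ext (h i hi)
        rw [algebraMap_smul, ← tmul_smul, this, tmul_zero]
    | add a b ha hb =>
      rw [ha, hb, add_zero]
  · intro z
    induction z using TensorProduct.induction_on with
    | zero => exact ⟨0, map_zero _⟩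
    | tmul s y =>
      obtain ⟨I, hI, h⟩ := hcok y
      refine gab_mem (leftAct R S _) (LinearMap.lTensor S φ).toAddMonoidHom.range ?_ I hI _ ?_
      · rintro s _ ⟨x, rfl⟩
        refine ⟨s • x, ?_⟩
        change LinearMap.lTensor S φ (s • x) = s • LinearMap.lTensor S φ x
        exact map_smul (AlgebraTensorModule.lTensor S S φ) s x
      · intro i hi
        obtain ⟨x, hx⟩ := h i hi
        refine ⟨s ⊗ₜ x, ?_⟩
        change LinearMap.lTensor S φ (s ⊗ₜ x) = algebraMap R S i • (s ⊗ₜ[R] y)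
        rw [algebraMap_smul, ← tmul_smul, hx, LinearMap.lTensor_tmul]
    | add a b ha hb =>
      obtain ⟨x, rfl⟩ := ha
      obtain ⟨y, rfl⟩ := hb
      exact ⟨x + y, map_add _ _ _⟩

end gab

/-- constructor -/
def mkHom {T C : Type*} [CommRing T] [AddCommGroup C] (F : T → C →+ C) (h1 : ∀ x, F 1 x = x)
    (hmul : ∀ a b x, F (a * b) x = F a (F b x)) (h0 : ∀ x, F 0 x = 0)
    (hadd : ∀ a b x, F (a + b) x = F a x + F b x) : T →+* AddMonoid.End C where
  toFun := F
  map_one' := AddMonoidHom.ext h1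
  map_mul' a b := AddMonoidHom.ext (hmul a b)
  map_zero' := AddMonoidHom.ext h0
  map_add' a b := AddMonoidHom.ext (hadd a b)

/-- constructor from linear endomorphisms -/
def mkLin {R T C : Type*} [CommRing R] [CommRing T] [AddCommGroup C] [Module R C]
    (L : T →+* Module.End R C) : T →+* AddMonoid.End C :=
  mkHom (fun t => (L t).toAddMonoidHom)
    (fun x => by change L 1 x = x; rw [map_one]; rfl)
    (fun a b x => by change L (a * b) x = L a (L b x); rw [map_mul]; rfl)
    (fun x => by change L 0 x = 0; rw [map_zero]; rfl)
    (fun a b x => by change L (a + b) x = L a x + L b x; rw [map_add]; rfl)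

/-- the action transported along an equivalence -/
def conj {R A A' : Type*} [CommRing R] [AddCommGroup A] [AddCommGroup A'] [Module R A']
    (e : A' ≃+ A) : R →+* AddMonoid.End A :=
  mkHom (fun r => e.toAddMonoidHom.comp
      ((DistribSMul.toAddMonoidHom A' r).comp e.symm.toAddMonoidHom))
    (fun x => by simp) (fun a b x => by simp [mul_smul]) (fun x => by simp)
    (fun a b x => by simp [add_smul])

theorem conj_apply {R A A' : Type*} [CommRing R] [AddCommGroup A] [AddCommGroup A'] [Module R A']
    (e : A' ≃+ A) (r : R) (a : A) : conj e r a = e (r • e.symm a) := rfl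

/-- right action of `S` on `A ⊗ S` -/
def rho (R S A : Type*) [CommRing R] [CommRing S] [Algebra R S] [AddCommGroup A] [Module R A] :
    S →+* AddMonoid.End (A ⊗[R] S) :=
  mkLin ((Module.End.lTensorAlgHom R S A).toRingHom.comp (Algebra.lmul R S).toRingHom)

theorem rho_tmul (R : Type*) {S A : Type*} [CommRing R] [CommRing S] [Algebra R S] [AddCommGroup A]
    [Module R A] (t : S) (a : A) (s : S) : rho R S A t (a ⊗ₜ s) = a ⊗ₜ (t * s) := rfl

/-- right action on the triple tensor product -/
def rhoQ {R S N' : Type*} [CommRing R] [CommRing S] [Algebra R S] [AddCommGroup N'] [Module R N']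
    (ρ : S →+* AddMonoid.End N') (h : ∀ t (r : R) x, ρ t (r • x) = r • ρ t x) :
    S →+* AddMonoid.End (S ⊗[R] N') :=
  mkLin ((Module.End.lTensorAlgHom R N' S).toRingHom.comp
    ({ toFun := fun t => { toFun := ρ t, map_add' := map_add _, map_smul' := h t }
       map_one' := LinearMap.ext fun x => by change ρ 1 x = x; rw [map_one]; rfl
       map_mul' := fun a b => LinearMap.ext fun x => by
        change ρ (a * b) x = ρ a (ρ b x); rw [map_mul]; rfl
       map_zero' := LinearMap.ext fun x => by change ρ 0 x = 0; rw [map_zero]; rfl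
       map_add' := fun a b => LinearMap.ext fun x => by
        change ρ (a + b) x = ρ a x + ρ b x; rw [map_add]; rfl } : S →+* Module.End R N'))

theorem rhoQ_tmul {R S N' : Type*} [CommRing R] [CommRing S] [Algebra R S] [AddCommGroup N']
    [Module R N'] (ρ : S →+* AddMonoid.End N') (h : ∀ t (r : R) x, ρ t (r • x) = r • ρ t x)
    (t s : S) (x : N') : rhoQ ρ h t (s ⊗ₜ x) = s ⊗ₜ ρ t x := rfl

theorem hbot {C : Type*} [AddCommGroup C] (D : AddMonoid.End C) : ∀ x ∈ (⊥ : AddSubgroup C),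
    D x ∈ (⊥ : AddSubgroup C) := by
  intro x hx
  have : x = 0 := hx
  subst this
  rw [map_zero]; exact zero_mem _

theorem gab_inf {R S : Type*} [CommRing R] [CommRing S] [Algebra R S] {I J : Ideal R}
    (h : I.map (algebraMap R S) = ⊤) (h' : J.map (algebraMap R S) = ⊤) :
    (I ⊓ J).map (algebraMap R S) = ⊤ := by
  rw [eq_top_iff, ← gab_mul h h']
  exact Ideal.map_mono Ideal.mul_le_inf

theorem tors_add {R S C : Type*} [CommRing R] [CommRing S] [Algebra R S] [AddCommGroup C]
    (l : R →+* AddMonoid.End C) (P : AddSubgroup C) {x y : C}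
    (hx : ∃ I : Ideal R, I.map (algebraMap R S) = ⊤ ∧ ∀ i ∈ I, l i x ∈ P)
    (hy : ∃ I : Ideal R, I.map (algebraMap R S) = ⊤ ∧ ∀ i ∈ I, l i y ∈ P) :
    ∃ I : Ideal R, I.map (algebraMap R S) = ⊤ ∧ ∀ i ∈ I, l i (x + y) ∈ P := by
  obtain ⟨I, hI, h⟩ := hx
  obtain ⟨J, hJ, h'⟩ := hy
  refine ⟨I ⊓ J, gab_inf hI hJ, fun i hi => ?_⟩
  have e : l i (x + y) = l i x + l i y := map_add (l i) x y
  rw [e]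
  exact P.add_mem (h i hi.1) (h' i hi.2)

set_option maxHeartbeats 800000 in
theorem core {R S A A' N' : Type*} [CommRing R] [CommRing S] [Algebra R S] [Module.Flat R S]
    (hepi : Function.Bijective (LinearMap.mul' R S))
    [AddCommGroup A] [Module R A] [AddCommGroup A'] [Module R A'] (e : A' ≃+ A)
    [AddCommGroup N'] [Module R N'] (eN : N' ≃+ A ⊗[R] S)
    (hA : ∀ (r s : R) (a : A), conj e r (s • a) = s • conj e r a)
    (hAq : ∀ a : A, ∃ n, a ∈ fil (fun s => conj e s - Module.toAddMonoidEnd R A s) n)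
    (hm : ∀ (r : R) (a : A) (s : S), conj eN r (a ⊗ₜ s) = (conj e r a) ⊗ₜ s)
    (f : S ⊗[R] A' →+ S ⊗[R] N')
    (hf : ∀ s a, f (s ⊗ₜ a) = s ⊗ₜ eN.symm (e a ⊗ₜ 1))
    (g : A ⊗[R] S →+ S ⊗[R] N')
    (hg : ∀ a s, g (a ⊗ₜ s) = 1 ⊗ₜ eN.symm (a ⊗ₜ s)) :
    Function.Bijective f ∧ Function.Bijective g := by
  let lN : R →+* AddMonoid.End (A ⊗[R] S) := conj eN
  let rN : R →+* AddMonoid.End (A ⊗[R] S) := (rho R S A).comp (algebraMap R S)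
  have rN_tmul : ∀ (r : R) (a : A) (s : S), rN r (a ⊗ₜ s) = (r • a) ⊗ₜ s := by
    intro r a s
    change rho R S A (algebraMap R S r) (a ⊗ₜ s) = _
    rw [rho_tmul, ← Algebra.smul_def, smul_tmul]
  have hlρ : ∀ (r : R) (t : S) x, lN r (rho R S A t x) = rho R S A t (lN r x) := by
    intro r t x
    induction x using TensorProduct.induction_on with
    | zero => simp only [map_zero]
    | tmul a s => rw [rho_tmul, hm, hm, rho_tmul]
    | add x y hx hy => simp only [map_add, hx, hy]
  have hlrN : ∀ s t x, lN s (rN t x) = rN t (lN s x) := fun s t x => hlρ s _ x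
  have hNq : ∀ x, ∃ n, x ∈ fil (fun s => lN s - rN s) n := by
    intro x
    induction x using TensorProduct.induction_on with
    | zero => exact ⟨0, zero_mem _⟩
    | tmul a s =>
      refine fil_map' (l := conj e) (r := Module.toAddMonoidEnd R A)
        (((TensorProduct.mk R A S).flip s).toAddMonoidHom) ?_ ?_ (hAq a)
      · intro r x
        exact (hm r x s).symm
      · intro r x
        exact (rN_tmul r x s).symm
    | add x y hx hy => exact fil_add _ hx hy
  have hgN : ∀ y, g y = 1 ⊗ₜ eN.symm y := by
    intro y
    induction y using TensorProduct.induction_on with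
    | zero => rw [map_zero, map_zero, tmul_zero]
    | tmul a s => exact hg a s
    | add x y hx hy => rw [map_add, map_add, tmul_add, hx, hy]
  have hlN : ∀ (r : R) (x : N'), eN (r • x) = lN r (eN x) := by
    intro r x
    change _ = eN (r • eN.symm (eN x))
    rw [AddEquiv.symm_apply_apply]
  constructor
  · let φ : A' →ₗ[R] N' :=
      { toFun := fun a => eN.symm (e a ⊗ₜ 1)
        map_add' := fun a b => by rw [map_add, add_tmul, map_add]
        map_smul' := fun r a => by
          apply eN.injective
          rw [RingHom.id_apply, hlN, AddEquiv.apply_symm_apply, AddEquiv.apply_symm_apply]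
          change _ = conj eN r _
          rw [hm, conj_apply, AddEquiv.symm_apply_apply] }
    have hfφ : ⇑f = LinearMap.lTensor S φ := by
      funext z
      induction z using TensorProduct.induction_on with
      | zero => rw [map_zero, map_zero]
      | tmul s a => rw [hf, LinearMap.lTensor_tmul]; rfl
      | add x y hx hy => rw [map_add, map_add, hx, hy]
    rw [hfφ]
    apply L3
    · intro x hx
      have h0 : e x ⊗ₜ[R] (1 : S) = 0 := by
        apply eN.symm.injective
        rw [map_zero]; exact hx
      have h1 : (1 : S) ⊗ₜ[R] e x = 0 := by
        have := congrArg (TensorProduct.comm R A S) h0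
        simpa using this
      obtain ⟨n, hn⟩ := hAq (e x)
      refine ⟨_, gab_pow (L1 _ h1) n, fun i hi => ?_⟩
      have := swap' (conj e) (Module.toAddMonoidEnd R A) hA ⊥ (fun s => hbot _) (fun s => hbot _)
        _ n (e x) hn (fun i hi => hi) i hi
      have h2 : conj e i (e x) = 0 := this
      rw [conj_apply, AddEquiv.symm_apply_apply] at h2
      exact (map_eq_zero_iff e e.injective).1 h2
    · intro y
      let P : AddSubgroup (A ⊗[R] S) :=
        (((TensorProduct.mk R A S).flip 1).toAddMonoidHom).range
      have hr : ∀ y : A ⊗[R] S, ∃ I : Ideal R, I.map (algebraMap R S) = ⊤ ∧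
          ∀ i ∈ I, rN i y ∈ P := by
        intro y
        induction y using TensorProduct.induction_on with
        | zero => exact ⟨⊤, Ideal.map_top _, fun i _ => by rw [map_zero]; exact zero_mem _⟩
        | tmul a s =>
          obtain ⟨I, hI, h⟩ := L2 hepi s
          refine ⟨I, hI, fun i hi => ?_⟩
          obtain ⟨t, ht⟩ := h i hi
          refine ⟨t • a, ?_⟩
          rw [rN_tmul, smul_tmul, ht]
          change (t • a) ⊗ₜ[R] (1 : S) = _
          rw [smul_tmul, Algebra.algebraMap_eq_smul_one]
        | add x y hx hy =>
          exact tors_add rN P hx hy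
      obtain ⟨I, hI, h⟩ := hr (eN y)
      obtain ⟨n, hn⟩ := hNq (eN y)
      refine ⟨I ^ n, gab_pow hI n, fun i hi => ?_⟩
      obtain ⟨a, ha⟩ := swap' lN rN hlrN P
        (by
          rintro s _ ⟨a, rfl⟩
          exact ⟨conj e s a, (hm s a 1).symm⟩)
        (by
          rintro s _ ⟨a, rfl⟩
          exact ⟨s • a, (rN_tmul s a 1).symm⟩) I n (eN y) hn h i hi
      refine ⟨e.symm a, ?_⟩
      apply eN.injective
      rw [hlN, ← ha]
      change a ⊗ₜ[R] (1 : S) = eN (eN.symm (e (e.symm a) ⊗ₜ 1))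
      rw [AddEquiv.apply_symm_apply, AddEquiv.apply_symm_apply]
  · constructor
    · rw [injective_iff_map_eq_zero]
      intro y hy
      rw [hgN] at hy
      obtain ⟨n, hn⟩ := hNq y
      refine gab_mem (rho R S A) ⊥ (fun s => hbot _) _ (gab_pow (L1 _ hy) n) y ?_
      refine swap lN rN hlrN ⊥ (fun s => hbot _) (fun s => hbot _) _ n y hn ?_
      intro i hi
      have hi' : i • eN.symm y = 0 := hi
      change eN (i • eN.symm y) = 0
      rw [hi', map_zero]
    · intro z
      let ρ' : S →+* AddMonoid.End N' :=
        mkHom (fun t => eN.symm.toAddMonoidHom.comp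
            (AddMonoidHom.comp (rho R S A t) eN.toAddMonoidHom))
          (fun x => by
            change eN.symm (rho R S A 1 (eN x)) = x
            rw [map_one]; exact eN.symm_apply_apply x)
          (fun a b x => by
            change eN.symm (rho R S A (a * b) (eN x)) =
              eN.symm (rho R S A a (eN (eN.symm (rho R S A b (eN x)))))
            rw [map_mul, AddEquiv.apply_symm_apply]; rfl)
          (fun x => by
            change eN.symm (rho R S A 0 (eN x)) = 0
            rw [map_zero]; exact map_zero eN.symm)
          (fun a b x => by
            change eN.symm (rho R S A (a + b) (eN x)) =
              eN.symm (rho R S A a (eN x)) + eN.symm (rho R S A b (eN x))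
            rw [map_add (rho R S A)]; exact map_add eN.symm _ _)
      have hρ'a : ∀ t x, ρ' t x = eN.symm (rho R S A t (eN x)) := fun _ _ => rfl
      have hρ' : ∀ t (r : R) x, ρ' t (r • x) = r • ρ' t x := by
        intro t r x
        apply eN.injective
        rw [hlN, hρ'a, hρ'a, AddEquiv.apply_symm_apply, AddEquiv.apply_symm_apply, hlN, hlρ]
      let ρQ := rhoQ (R := R) ρ' hρ'
      let lQ : R →+* AddMonoid.End (S ⊗[R] N') := Module.toAddMonoidEnd R _
      let rQ : R →+* AddMonoid.End (S ⊗[R] N') := ρQ.comp (algebraMap R S)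
      have hlrQ : ∀ s t x, lQ s (rQ t x) = rQ t (lQ s x) := by
        intro r t x
        change r • rhoQ ρ' hρ' (algebraMap R S t) x = rhoQ ρ' hρ' (algebraMap R S t) (r • x)
        exact (map_smul (LinearMap.lTensor S _) r x).symm
      have hQq : ∀ x, ∃ n, x ∈ fil (fun s => lQ s - rQ s) n := by
        intro x
        induction x using TensorProduct.induction_on with
        | zero => exact ⟨0, zero_mem _⟩
        | tmul s x =>
          have := fil_map' (l := lN) (r := rN) (l' := lQ) (r' := rQ)
            ((TensorProduct.mk R S N' s).toAddMonoidHom.comp eN.symm.toAddMonoidHom) ?_ ?_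
            (hNq (eN x))
          · simpa using this
          · intro r x
            change s ⊗ₜ[R] eN.symm (eN (r • eN.symm x)) = r • (s ⊗ₜ[R] eN.symm x)
            rw [AddEquiv.symm_apply_apply, tmul_smul]
          · intro r x
            change s ⊗ₜ[R] eN.symm (rho R S A (algebraMap R S r) x) =
              s ⊗ₜ[R] eN.symm (rho R S A (algebraMap R S r) (eN (eN.symm x)))
            rw [AddEquiv.apply_symm_apply]
        | add x y hx hy => exact fil_add _ hx hy
      have hPρ : ∀ s, ∀ x ∈ g.range, ρQ s x ∈ g.range := by
        rintro s _ ⟨y, rfl⟩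
        refine ⟨rho R S A s y, ?_⟩
        rw [hgN, hgN]
        change _ = (1 : S) ⊗ₜ[R] eN.symm (rho R S A s (eN (eN.symm y)))
        rw [AddEquiv.apply_symm_apply]
      have hl : ∀ z : S ⊗[R] N', ∃ I : Ideal R, I.map (algebraMap R S) = ⊤ ∧
          ∀ i ∈ I, lQ i z ∈ g.range := by
        intro z
        induction z using TensorProduct.induction_on with
        | zero => exact ⟨⊤, Ideal.map_top _, fun i _ => by rw [map_zero]; exact zero_mem _⟩
        | tmul s x =>
          obtain ⟨I, hI, h⟩ := L2 hepi s
          refine ⟨I, hI, fun i hi => ?_⟩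
          obtain ⟨t, ht⟩ := h i hi
          refine ⟨eN (t • x), ?_⟩
          rw [hgN, AddEquiv.symm_apply_apply]
          change _ = i • (s ⊗ₜ[R] x)
          rw [smul_tmul', ht, Algebra.algebraMap_eq_smul_one, smul_tmul]
        | add x y hx hy =>
          exact tors_add lQ g.range hx hy
      obtain ⟨I, hI, h⟩ := hl z
      obtain ⟨n, hn⟩ := hQq z
      refine gab_mem ρQ g.range hPρ _ (gab_pow hI n) z ?_
      refine swap lQ rQ hlrQ g.range ?_ (fun s => hPρ _) I n z hn h
      rintro s _ ⟨y, rfl⟩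
      refine ⟨eN (s • eN.symm y), ?_⟩
      rw [hgN, hgN, AddEquiv.symm_apply_apply]
      exact tmul_smul s (1 : S) (eN.symm y)

end QM

theorem bijective_canonical_maps_of_flat_epi
    {R S A : Type*} [CommRing R] [CommRing S] [Algebra R S]
    [Module.Flat R S]
    (hepi : Function.Bijective (LinearMap.mul' R S))
    [AddCommGroup A] (lA rA : Module R A)
    (hA : ∀ (r s : R) (a : A), ModSMul lA r (ModSMul rA s a) = ModSMul rA s (ModSMul lA r a))
    (hAq : IsQuasiModule lA rA)
    -- the left `R`-module structure on `A ⊗[R] S` induced by the left action on `A`: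
    (m : Module R (@TensorProduct R _ A S _ _ rA _))
    (hm : ∀ (r : R) (a : A) (s : S),
      ModSMul m r (@TensorProduct.tmul R _ A S _ _ rA _ a s) =
        @TensorProduct.tmul R _ A S _ _ rA _ (ModSMul lA r a) s)
    -- the canonical map `S ⊗[R] A → S ⊗[R] A ⊗[R] S`, `s ⊗ a ↦ s ⊗ a ⊗ 1`:
    (f : (@TensorProduct R _ S A _ _ _ lA) →+
      (@TensorProduct R _ S (@TensorProduct R _ A S _ _ rA _) _ _ _ m))
    (hf : ∀ (s : S) (a : A),
      f (@TensorProduct.tmul R _ S A _ _ _ lA s a) =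
        @TensorProduct.tmul R _ S (@TensorProduct R _ A S _ _ rA _) _ _ _ m s
          (@TensorProduct.tmul R _ A S _ _ rA _ a 1))
    -- the canonical map `A ⊗[R] S → S ⊗[R] A ⊗[R] S`, `a ⊗ s ↦ 1 ⊗ a ⊗ s`:
    (g : (@TensorProduct R _ A S _ _ rA _) →+
      (@TensorProduct R _ S (@TensorProduct R _ A S _ _ rA _) _ _ _ m))
    (hg : ∀ (a : A) (s : S),
      g (@TensorProduct.tmul R _ A S _ _ rA _ a s) =
        @TensorProduct.tmul R _ S (@TensorProduct R _ A S _ _ rA _) _ _ _ m 1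
          (@TensorProduct.tmul R _ A S _ _ rA _ a s)) :
    Function.Bijective f ∧ Function.Bijective g := by
  have hq : ∀ (n : ℕ) (a : A), a ∈ quasiFil lA rA n →
      a ∈ QM.fil (fun s => @QM.conj R A A _ _ _ lA (AddEquiv.refl A) s -
        @Module.toAddMonoidEnd R A _ _ rA s) (n + 1) := by
    intro n
    induction n with
    | zero =>
      intro a ha
      rw [QM.mem_fil_succ]
      exact ha
    | succ n ih =>
      intro a ha
      rw [QM.mem_fil_succ]
      exact fun s => ih _ (ha s)
  exact @QM.core R S A A (@TensorProduct R _ A S _ _ rA _) _ _ _ _ hepi _ rA _ lA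
    (AddEquiv.refl A) (@TensorProduct.addCommGroup R _ A S _ _ rA _) m (AddEquiv.refl _)
    hA (fun a => (hAq a).elim fun n hn => ⟨n + 1, hq n a hn⟩) hm f hf g hg
end

section
/- Let σ : R → S be a flat epimorphism of commutative rings and let A be a quasi-module over R. Then S ⊗_R A ⊗_R S, equipped with the S-S-bimodule structure in which S acts on the left through the first tensor factor and on the right through the last tensor factor, is a quasi-module over S. -/
section Helpers
open scoped TensorProduct
variable {S T : Type*} [CommRing S] [AddCommGroup T]

theorem ModSMul_add (l : Module S T) (s : S) (x y : T) :
    ModSMul l s (x + y) = ModSMul l s x + ModSMul l s y := by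
  let _ := l; exact smul_add s x y

theorem ModSMul_sub (l : Module S T) (s : S) (x y : T) :
    ModSMul l s (x - y) = ModSMul l s x - ModSMul l s y := by
  let _ := l; exact smul_sub s x y

theorem ModSMul_zero (l : Module S T) (s : S) : ModSMul l s (0 : T) = 0 := by
  let _ := l; exact smul_zero s

theorem ModSMul_one (l : Module S T) (x : T) : ModSMul l 1 x = x := by
  let _ := l; exact one_smul S x

theorem ModSMul_mul (l : Module S T) (s t : S) (x : T) :
    ModSMul l (s * t) x = ModSMul l s (ModSMul l t x) := by
  let _ := l; exact mul_smul s t x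

theorem ModSMul_add_left (l : Module S T) (s t : S) (x : T) :
    ModSMul l (s + t) x = ModSMul l s x + ModSMul l t x := by
  let _ := l; exact add_smul s t x

theorem ModSMul_comm (l : Module S T) (s t : S) (x : T) :
    ModSMul l s (ModSMul l t x) = ModSMul l t (ModSMul l s x) := by
  rw [← ModSMul_mul, mul_comm, ModSMul_mul]

/-- The commutator with `s`. -/
def qcomm (l r : Module S T) (s : S) : T →+ T where
  toFun x := ModSMul l s x - ModSMul r s x
  map_zero' := by simp [ModSMul_zero]
  map_add' x y := by simp only [ModSMul_add]; abel

/-- The filtration shifted by one, as additive subgroups. -/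
def qF (l r : Module S T) : ℕ → AddSubgroup T
  | 0 => ⊥
  | n + 1 => ⨅ s : S, (qF l r n).comap (qcomm l r s)

theorem mem_qF_succ (l r : Module S T) (n : ℕ) (x : T) :
    x ∈ qF l r (n + 1) ↔ ∀ s, ModSMul l s x - ModSMul r s x ∈ qF l r n := by
  simp [qF, AddSubgroup.mem_iInf, qcomm]

theorem mem_quasiFil_iff (l r : Module S T) (n : ℕ) (x : T) :
    x ∈ quasiFil l r n ↔ x ∈ qF l r (n + 1) := by
  induction n generalizing x with
  | zero => rw [mem_qF_succ]; simp [quasiFil, qF]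
  | succ n ih => rw [mem_qF_succ]; simp only [quasiFil, Set.mem_ofPred_eq, ih]

theorem qF_mono (l r : Module S T) : Monotone (qF l r) := by
  apply monotone_nat_of_le_succ
  intro n
  induction n with
  | zero => exact bot_le
  | succ n ih =>
    intro x hx
    rw [mem_qF_succ] at hx ⊢
    exact fun s => ih (hx s)

theorem qF_smul (l r : Module S T)
    (h : ∀ (s t : S) (x : T), ModSMul l s (ModSMul r t x) = ModSMul r t (ModSMul l s x))
    (n : ℕ) (x : T) (hx : x ∈ qF l r n) (s : S) :
    ModSMul l s x ∈ qF l r n ∧ ModSMul r s x ∈ qF l r n := by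
  induction n generalizing x with
  | zero =>
    obtain rfl : x = 0 := by simpa [qF] using hx
    simp [ModSMul_zero]
  | succ n ih =>
    simp only [mem_qF_succ] at hx ⊢
    constructor
    · intro t
      rw [ModSMul_comm l, ← h, ← ModSMul_sub]
      exact (ih _ (hx t)).1
    · intro t
      rw [ModSMul_comm r, h, ← ModSMul_sub]
      exact (ih _ (hx t)).2

theorem qF_epi {R : Type*} [CommRing R] [Algebra R S]
    (hepi : Function.Bijective (LinearMap.mul' R S)) (l r : Module S T)
    (h : ∀ (s t : S) (x : T), ModSMul l s (ModSMul r t x) = ModSMul r t (ModSMul l s x))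
    (n : ℕ) (x : T)
    (hx : ∀ c : R, ModSMul l (algebraMap R S c) x - ModSMul r (algebraMap R S c) x ∈ qF l r n) :
    x ∈ qF l r (n + 1) := by
  rw [mem_qF_succ]
  intro s
  let f : S →+ S →+ T ⧸ qF l r n :=
    AddMonoidHom.mk' (fun s => AddMonoidHom.mk'
        (fun t => QuotientAddGroup.mk (ModSMul l s (ModSMul r t x)))
        (fun a b => by rw [ModSMul_add_left, ModSMul_add]; rfl))
      (fun a b => by
        ext t
        simp only [AddMonoidHom.mk'_apply, AddMonoidHom.add_apply]
        rw [ModSMul_add_left]; rfl)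
  have hf : ∀ (c : R) (s t : S), f (c • s) t = f s (c • t) := by
    intro c s t
    change (QuotientAddGroup.mk _ : T ⧸ qF l r n) = QuotientAddGroup.mk _
    rw [eq_comm, QuotientAddGroup.eq]
    have := (qF_smul l r h n _ ((qF_smul l r h n _ (hx c) t).2) s).1
    convert this using 1
    rw [Algebra.smul_def, Algebra.smul_def, mul_comm _ s, mul_comm _ t, ModSMul_mul, ModSMul_mul,
      ModSMul_sub, ModSMul_sub, h (algebraMap R S c) t]
    abel
  have e : (s ⊗ₜ[R] (1 : S)) = (1 : S) ⊗ₜ[R] s := hepi.1 (by simp)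
  have e2 := congrArg (TensorProduct.liftAddHom f hf) e
  simp only [TensorProduct.liftAddHom_tmul] at e2
  change (QuotientAddGroup.mk _ : T ⧸ qF l r n) = QuotientAddGroup.mk _ at e2
  rw [eq_comm, QuotientAddGroup.eq, ModSMul_one, ModSMul_one] at e2
  rwa [sub_eq_neg_add]

theorem auxSmulTmul {R S M : Type*} [CommRing R] [CommRing S] [Algebra R S] [AddCommGroup M]
    (m : Module R M) (c : R) (y : M) :
    (c • (1 : S)) ⊗ₜ[R] y = (1 : S) ⊗ₜ[R] (ModSMul m c y) :=
  TensorProduct.smul_tmul c (1 : S) y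

end Helpers

theorem isQuasiModule_base_change_of_flat_epi
    {R S A : Type*} [CommRing R] [CommRing S] [Algebra R S]
    [Module.Flat R S]
    (hepi : Function.Bijective (LinearMap.mul' R S))
    [AddCommGroup A] (lA rA : Module R A)
    (hA : ∀ (r s : R) (a : A), ModSMul lA r (ModSMul rA s a) = ModSMul rA s (ModSMul lA r a))
    (hAq : IsQuasiModule lA rA)
    -- the left `R`-module structure on `A ⊗[R] S` induced by the left action on `A`:
    (m : Module R (@TensorProduct R _ A S _ _ rA _))
    (hm : ∀ (r : R) (a : A) (s : S),
      ModSMul m r (@TensorProduct.tmul R _ A S _ _ rA _ a s) =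
        @TensorProduct.tmul R _ A S _ _ rA _ (ModSMul lA r a) s)
    -- the `S`-`S`-bimodule structure on `S ⊗[R] A ⊗[R] S`: the left action `lT` through the
    -- first tensor factor and the right action `rT` through the last tensor factor:
    (lT rT : Module S (@TensorProduct R _ S (@TensorProduct R _ A S _ _ rA _) _ _ _ m))
    (hT : ∀ (s₁ s₂ : S) (x : @TensorProduct R _ S (@TensorProduct R _ A S _ _ rA _) _ _ _ m),
      ModSMul lT s₁ (ModSMul rT s₂ x) = ModSMul rT s₂ (ModSMul lT s₁ x))
    (hlT : ∀ (s' s : S) (x : @TensorProduct R _ A S _ _ rA _),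
      ModSMul lT s' (@TensorProduct.tmul R _ S (@TensorProduct R _ A S _ _ rA _) _ _ _ m s x) =
        @TensorProduct.tmul R _ S (@TensorProduct R _ A S _ _ rA _) _ _ _ m (s' * s) x)
    (hrT : ∀ (s' s : S) (a : A) (t : S),
      ModSMul rT s' (@TensorProduct.tmul R _ S (@TensorProduct R _ A S _ _ rA _) _ _ _ m s
          (@TensorProduct.tmul R _ A S _ _ rA _ a t)) =
        @TensorProduct.tmul R _ S (@TensorProduct R _ A S _ _ rA _) _ _ _ m s
          (@TensorProduct.tmul R _ A S _ _ rA _ a (t * s'))) :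
    IsQuasiModule lT rT := by
  have hin : ∀ (n : ℕ) (a : A), a ∈ qF lA rA n →
      (@TensorProduct.tmul R _ S (@TensorProduct R _ A S _ _ rA _) _ _ _ m 1
          (@TensorProduct.tmul R _ A S _ _ rA _ a 1)) ∈ qF lT rT n := by
    intro n
    induction n with
    | zero =>
      intro a ha
      obtain rfl : a = 0 := by simpa [qF] using ha
      rw [@TensorProduct.zero_tmul R _ A S _ _ rA _,
        @TensorProduct.tmul_zero R _ S _ _ _ _ m]
      exact zero_mem _
    | succ n ih =>
      intro a ha
      rw [mem_qF_succ] at ha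
      refine qF_epi hepi lT rT hT n _ fun c => ?_
      have key := ih _ (ha c)
      convert key using 1
      rw [hlT, hrT, @TensorProduct.sub_tmul R _ A S _ _ rA _,
        @TensorProduct.tmul_sub R _ S _ _ _ _ m, ← hm]
      congr 1
      · rw [mul_one, Algebra.algebraMap_eq_smul_one]
        exact auxSmulTmul m c _
      · rw [one_mul, Algebra.algebraMap_eq_smul_one]
        congr 1
        let _ := rA; exact (TensorProduct.smul_tmul c a (1 : S)).symm
  have hpure : ∀ (s : S) (y : @TensorProduct R _ A S _ _ rA _), ∃ n,
      (@TensorProduct.tmul R _ S (@TensorProduct R _ A S _ _ rA _) _ _ _ m s y) ∈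
        qF lT rT n := by
    intro s y
    induction y using TensorProduct.induction_on with
    | zero =>
      refine ⟨0, ?_⟩
      rw [@TensorProduct.tmul_zero R _ S _ _ _ _ m]
      exact zero_mem _
    | tmul a t =>
      obtain ⟨n, hn⟩ := hAq a
      rw [mem_quasiFil_iff] at hn
      refine ⟨n + 1, ?_⟩
      have := (qF_smul lT rT hT _ _ ((qF_smul lT rT hT _ _ (hin _ a hn) t).2) s).1
      rwa [hrT, hlT, mul_one, one_mul] at this
    | add y z hy hz =>
      obtain ⟨n, hn⟩ := hy
      obtain ⟨k, hk⟩ := hz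
      refine ⟨max n k, ?_⟩
      rw [@TensorProduct.tmul_add R _ S _ _ _ _ m]
      exact add_mem (qF_mono _ _ (le_max_left _ _) hn) (qF_mono _ _ (le_max_right _ _) hk)
  have hall : ∀ x : @TensorProduct R _ S (@TensorProduct R _ A S _ _ rA _) _ _ _ m, ∃ n,
      x ∈ qF lT rT n := by
    intro x
    induction x using TensorProduct.induction_on with
    | zero => exact ⟨0, zero_mem _⟩
    | tmul s y => exact hpure s y
    | add y z hy hz =>
      obtain ⟨n, hn⟩ := hy
      obtain ⟨k, hk⟩ := hz
      exact ⟨max n k,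
        add_mem (qF_mono _ _ (le_max_left _ _) hn) (qF_mono _ _ (le_max_right _ _) hk)⟩
  intro x
  obtain ⟨n, hn⟩ := hall x
  exact ⟨n, (mem_quasiFil_iff _ _ _ _).2 (qF_mono _ _ (Nat.le_succ n) hn)⟩
end

section
/- Let σ : R → S be a flat epimorphism of commutative rings, let A be a quasi-module over R, let B be an S-S-bimodule, and let f : A → B be a morphism of R-R-bimodules, where B is regarded as an R-R-bimodule by restricting both actions along σ. Then the induced map S ⊗_R A → B, s ⊗ a ↦ s·f(a), is bijective if and only if the induced map A ⊗_R S → B, a ⊗ s ↦ f(a)·s, is bijective. -/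
open TensorProduct in
/-- Locality of a filtered module whose graded pieces are `S`-modules. -/
theorem qm_local {R S M : Type*} [CommRing R] [CommRing S] [Algebra R S] [Module.Flat R S]
    (hepi : ∀ s : S, (1 : S) ⊗ₜ[R] s = s ⊗ₜ[R] (1 : S))
    [AddCommGroup M] [Module R M] (act : S →+* Module.End R M)
    (N : ℕ → Submodule R M) (h0 : N 0 = ⊥)
    (hact : ∀ n s m, m ∈ N n → act s m ∈ N n)
    (hN : ∀ n, ∀ m ∈ N (n + 1), ∀ r : R, act (algebraMap R S r) m - r • m ∈ N n)
    (hex : ∀ m, ∃ n, m ∈ N n) :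
    Function.Bijective (fun m : M => m ⊗ₜ[R] (1 : S)) := by
  constructor
  · have key : ∀ n, ∀ m ∈ N n, m ⊗ₜ[R] (1 : S) = 0 → m = 0 := by
      intro n
      induction n with
      | zero => intro m hm _; simpa [h0] using hm
      | succ n ih =>
        intro m hm hz
        refine ih m ?_ hz
        have hinj : Function.Injective (LinearMap.rTensor S (N (n+1)).subtype) :=
          Module.Flat.rTensor_preserves_injective_linearMap _ Subtype.val_injective
        have hz' : (⟨m, hm⟩ : N (n+1)) ⊗ₜ[R] (1 : S) = 0 := by
          apply hinj
          simpa using hz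
        let g : N (n+1) →+ S →+ M ⧸ N n :=
          AddMonoidHom.mk' (fun x => AddMonoidHom.mk'
            (fun s => (N n).mkQ (act s x.1)) (by intro a b; simp))
            (by intro a b; ext s; simp)
        let k : N (n+1) ⊗[R] S →+ M ⧸ N n := TensorProduct.liftAddHom g (by
          intro r x s
          change (N n).mkQ (act s (r • x.1)) = (N n).mkQ (act (r • s) x.1)
          rw [← sub_eq_zero, ← map_sub, Submodule.mkQ_apply, Submodule.Quotient.mk_eq_zero,
            ← neg_mem_iff, neg_sub, Algebra.smul_def, mul_comm, map_mul, Module.End.mul_apply,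
            ← map_sub]
          exact hact _ _ _ (hN _ _ x.2 r))
        have := congrArg k hz'
        rw [map_zero] at this
        change (N n).mkQ (act 1 m) = 0 at this
        rw [map_one, Submodule.mkQ_apply, Submodule.Quotient.mk_eq_zero] at this
        exact this
    intro x y hxy
    obtain ⟨n, hn⟩ := hex (x - y)
    refine sub_eq_zero.1 (key n _ hn ?_)
    rw [TensorProduct.sub_tmul]
    exact sub_eq_zero.2 hxy
  · let ι : M →ₗ[R] M ⊗[R] S := (TensorProduct.mk R M S).flip 1
    have key : ∀ n, ∀ m ∈ N n, ∀ s : S, m ⊗ₜ[R] s ∈ LinearMap.range ι := by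
      intro n
      induction n with
      | zero => intro m hm s; rw [h0, Submodule.mem_bot] at hm; simp [hm]
      | succ n ih =>
        intro m hm s
        let g : S →+ S →+ (M ⊗[R] S) ⧸ LinearMap.range ι :=
          AddMonoidHom.mk' (fun x => AddMonoidHom.mk'
            (fun t => (LinearMap.range ι).mkQ (act x m ⊗ₜ[R] t))
              (by intro a b; rw [TensorProduct.tmul_add, map_add]))
            (by
              intro a b; ext t
              change (LinearMap.range ι).mkQ (act (a + b) m ⊗ₜ[R] t) =
                (LinearMap.range ι).mkQ (act a m ⊗ₜ[R] t) +
                (LinearMap.range ι).mkQ (act b m ⊗ₜ[R] t)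
              rw [map_add, LinearMap.add_apply, TensorProduct.add_tmul, map_add])
        let k : S ⊗[R] S →+ (M ⊗[R] S) ⧸ LinearMap.range ι := TensorProduct.liftAddHom g (by
          intro r x t
          change (LinearMap.range ι).mkQ (act (r • x) m ⊗ₜ[R] t) =
            (LinearMap.range ι).mkQ (act x m ⊗ₜ[R] (r • t))
          rw [← sub_eq_zero, ← map_sub, Submodule.mkQ_apply, Submodule.Quotient.mk_eq_zero,
            ← TensorProduct.smul_tmul, ← TensorProduct.sub_tmul, Algebra.smul_def, map_mul,
            Module.End.mul_apply]
          exact ih _ (hN _ _ (hact _ _ _ hm) r) t)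
        have h := congrArg k (hepi s)
        change (LinearMap.range ι).mkQ (act 1 m ⊗ₜ[R] s) =
            (LinearMap.range ι).mkQ (act s m ⊗ₜ[R] 1) at h
        rw [← sub_eq_zero, ← map_sub, Submodule.mkQ_apply, Submodule.Quotient.mk_eq_zero,
          map_one, Module.End.one_apply] at h
        have h2 : act s m ⊗ₜ[R] (1 : S) ∈ LinearMap.range ι := ⟨act s m, rfl⟩
        simpa using add_mem h h2
    intro z
    have : z ∈ LinearMap.range ι := by
      induction z with
      | zero => exact zero_mem _
      | tmul m s => obtain ⟨n, hn⟩ := hex m; exact key n m hn s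
      | add x y hx hy => exact add_mem hx hy
    exact this

open TensorProduct in
theorem qm_half {R R' S A : Type*} [CommRing R] [CommRing R'] [CommRing S] [Algebra R S]
    [Algebra R' S] [Module.Flat R' S]
    (hepi : ∀ s : S, (1 : S) ⊗ₜ[R'] s = s ⊗ₜ[R'] (1 : S))
    [AddCommGroup A] [Module R A] [Module R' A] [SMulCommClass R R' A]
    (e : R' → R) (he : ∀ r, algebraMap R S (e r) = algebraMap R' S r)
    (Fl : ℕ → Set A) (h0 : ∀ a ∈ Fl 0, a = 0) (hmono : Monotone Fl)
    (hFl : ∀ n, ∀ a ∈ Fl (n + 1), ∀ r : R', e r • a - r • a ∈ Fl n)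
    (hex : ∀ a, ∃ n, a ∈ Fl n) :
    Function.Bijective (fun x : A ⊗[R] S => x ⊗ₜ[R'] (1 : S)) := by
  let a0 : S → Module.End R' (A ⊗[R] S) := fun s =>
    { toFun := LinearMap.lTensor A (LinearMap.mulLeft R s)
      map_add' := map_add _
      map_smul' := by
        intro r x
        induction x with
        | zero => simp
        | tmul a t => simp [TensorProduct.smul_tmul']
        | add x y hx hy => simp only [smul_add, map_add, hx, hy] }
  have a0t : ∀ s a t, a0 s (a ⊗ₜ[R] t) = a ⊗ₜ[R] (s * t) := fun s a t => rfl
  have ext0 : ∀ p q : Module.End R' (A ⊗[R] S),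
      (∀ a t, p (a ⊗ₜ[R] t) = q (a ⊗ₜ[R] t)) → p = q := by
    intro p q h
    ext x
    induction x with
    | zero => simp
    | tmul a t => exact h a t
    | add x y hx hy => simp only [map_add, hx, hy]
  let act : S →+* Module.End R' (A ⊗[R] S) :=
    { toFun := a0
      map_one' := ext0 _ _ (by intro a t; simp [a0t])
      map_mul' := fun s u => ext0 _ _ (by intro a t; simp [a0t, mul_assoc])
      map_zero' := ext0 _ _ (by intro a t; simp [a0t])
      map_add' := fun s u => ext0 _ _ (by
        intro a t; simp [a0t, add_mul, TensorProduct.tmul_add]) }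
  have actt : ∀ s a t, act s (a ⊗ₜ[R] t) = a ⊗ₜ[R] (s * t) := fun s a t => rfl
  let N : ℕ → Submodule R' (A ⊗[R] S) := fun n =>
    Submodule.span R' {x | ∃ a ∈ Fl n, ∃ s : S, x = a ⊗ₜ[R] s}
  have Nmono : Monotone N := by
    intro m n h
    apply Submodule.span_mono
    rintro _ ⟨a, ha, s, rfl⟩
    exact ⟨a, hmono h ha, s, rfl⟩
  refine qm_local hepi act N ?_ ?_ ?_ ?_
  · rw [eq_bot_iff]
    apply Submodule.span_le.2
    rintro _ ⟨a, ha, s, rfl⟩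
    simp [h0 a ha]
  · intro n s m hm
    induction hm using Submodule.span_induction with
    | mem x hx =>
      obtain ⟨a, ha, t, rfl⟩ := hx
      exact Submodule.subset_span ⟨a, ha, s * t, rfl⟩
    | zero => simp
    | add x y _ _ hx hy => rw [map_add]; exact add_mem hx hy
    | smul r x _ hx => rw [map_smul]; exact Submodule.smul_mem _ _ hx
  · intro n m hm r
    induction hm using Submodule.span_induction with
    | mem x hx =>
      obtain ⟨a, ha, t, rfl⟩ := hx
      refine Submodule.subset_span ⟨_, hFl n a ha r, t, ?_⟩
      rw [actt, ← he, ← Algebra.smul_def, ← TensorProduct.smul_tmul, TensorProduct.sub_tmul,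
        TensorProduct.smul_tmul']
    | zero => simp
    | add x y _ _ hx hy =>
      rw [map_add, smul_add, add_sub_add_comm]; exact add_mem hx hy
    | smul u x _ hx =>
      rw [map_smul, smul_comm r u, ← smul_sub]; exact Submodule.smul_mem _ _ hx
  · intro m
    induction m with
    | zero => exact ⟨0, zero_mem _⟩
    | tmul a s =>
      obtain ⟨n, hn⟩ := hex a
      exact ⟨n, Submodule.subset_span ⟨a, hn, s, rfl⟩⟩
    | add x y hx hy =>
      obtain ⟨m, hm⟩ := hx
      obtain ⟨n, hn⟩ := hy
      exact ⟨max m n, add_mem (Nmono (le_max_left _ _) hm) (Nmono (le_max_right _ _) hn)⟩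

open TensorProduct in
theorem qm_ext {R R' S A B : Type*} [CommRing R] [CommRing R'] [CommRing S] [Algebra R S]
    [Algebra R' S] [AddCommGroup A] [Module R A] [Module R' A] [SMulCommClass R R' A]
    [AddCommGroup B] (p q : (A ⊗[R] S) ⊗[R'] S →+ B)
    (h : ∀ a s t, p ((a ⊗ₜ[R] s) ⊗ₜ[R'] t) = q ((a ⊗ₜ[R] s) ⊗ₜ[R'] t)) (z) : p z = q z := by
  induction z with
  | zero => simp
  | tmul x t =>
    induction x with
    | zero => simp
    | tmul a s => exact h a s t
    | add x y hx hy => simp only [TensorProduct.add_tmul, map_add, hx, hy]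
  | add x y hx hy => simp only [map_add, hx, hy]

open TensorProduct in
theorem qm_lift {R R' S A B : Type*} [CommRing R] [CommRing R'] [CommRing S] [Algebra R S]
    [Algebra R' S] [AddCommGroup A] [Module R A] [Module R' A] [SMulCommClass R R' A]
    [AddCommGroup B] (φ : A →+ S →+ S →+ B)
    (h1 : ∀ (r : R) a s t, φ (r • a) s t = φ a (r • s) t)
    (h2 : ∀ (r : R') a s t, φ (r • a) s t = φ a s (r • t)) :
    ∃ H : (A ⊗[R] S) ⊗[R'] S →+ B, ∀ a s t, H ((a ⊗ₜ[R] s) ⊗ₜ[R'] t) = φ a s t := by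
  let k : A ⊗[R] S →+ S →+ B := TensorProduct.liftAddHom φ (by
    intro r a s; ext t; exact h1 r a s t)
  refine ⟨TensorProduct.liftAddHom k ?_, fun a s t => rfl⟩
  intro r x t
  induction x with
  | zero => simp
  | tmul a s => exact h2 r a s t
  | add x y hx hy => simp only [smul_add, map_add, AddMonoidHom.add_apply, hx, hy]

open TensorProduct in
theorem qm_swap {R R' S A : Type*} [CommRing R] [CommRing R'] [CommRing S] [Algebra R S]
    [Algebra R' S] [AddCommGroup A] [Module R A] [Module R' A] [SMulCommClass R R' A]
    [SMulCommClass R' R A] :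
    ∃ H : (A ⊗[R] S) ⊗[R'] S →+ (A ⊗[R'] S) ⊗[R] S,
      ∀ a s t, H ((a ⊗ₜ[R] s) ⊗ₜ[R'] t) = (a ⊗ₜ[R'] t) ⊗ₜ[R] s := by
  let φ : A →+ S →+ S →+ (A ⊗[R'] S) ⊗[R] S :=
    AddMonoidHom.mk' (fun a => AddMonoidHom.mk' (fun s => AddMonoidHom.mk'
      (fun t => (a ⊗ₜ[R'] t) ⊗ₜ[R] s)
      (by intro x y; simp [TensorProduct.tmul_add, TensorProduct.add_tmul]))
      (by intro x y; ext t; simp [TensorProduct.tmul_add]))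
      (by intro x y; ext s t; simp [TensorProduct.add_tmul])
  refine qm_lift φ ?_ ?_
  · intro r a s t
    change ((r • a) ⊗ₜ[R'] t) ⊗ₜ[R] s = (a ⊗ₜ[R'] t) ⊗ₜ[R] (r • s)
    rw [← TensorProduct.smul_tmul, TensorProduct.smul_tmul']
  · intro r a s t
    change ((r • a) ⊗ₜ[R'] t) ⊗ₜ[R] s = (a ⊗ₜ[R'] (r • t)) ⊗ₜ[R] s
    rw [TensorProduct.smul_tmul]

open TensorProduct in
theorem qm_main {R R' S A B : Type*} [CommRing R] [CommRing R'] [CommRing S] [Algebra R S]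
    [Algebra R' S] [Module.Flat R S] [Module.Flat R' S]
    (hepi : ∀ s : S, (1 : S) ⊗ₜ[R] s = s ⊗ₜ[R] (1 : S))
    (hepi' : ∀ s : S, (1 : S) ⊗ₜ[R'] s = s ⊗ₜ[R'] (1 : S))
    [AddCommGroup A] [Module R A] [Module R' A] [SMulCommClass R R' A] [SMulCommClass R' R A]
    (e : R' → R) (he : ∀ r, algebraMap R S (e r) = algebraMap R' S r)
    (e' : R → R') (he' : ∀ r, algebraMap R' S (e' r) = algebraMap R S r)
    (Fl : ℕ → Set A) (h0 : ∀ a ∈ Fl 0, a = 0) (hmono : Monotone Fl)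
    (hFl : ∀ n, ∀ a ∈ Fl (n + 1), ∀ r : R', e r • a - r • a ∈ Fl n)
    (hFl' : ∀ n, ∀ a ∈ Fl (n + 1), ∀ r : R, e' r • a - r • a ∈ Fl n)
    (hex : ∀ a, ∃ n, a ∈ Fl n)
    [AddCommGroup B] (ml mr : S →+* AddMonoid.End B)
    (hB : ∀ s t b, ml s (mr t b) = mr t (ml s b))
    (f : A →+ B) (hfl : ∀ (r : R) a, f (r • a) = ml (algebraMap R S r) (f a))
    (hfr : ∀ (r : R') a, f (r • a) = mr (algebraMap R' S r) (f a))
    (F : A ⊗[R] S →+ B) (hF : ∀ a s, F (a ⊗ₜ s) = ml s (f a))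
    (G : A ⊗[R'] S →+ B) (hG : ∀ a s, G (a ⊗ₜ s) = mr s (f a)) :
    Function.Bijective F ↔ Function.Bijective G := by
  have b1 := qm_half (R := R) hepi' e he Fl h0 hmono hFl hex
  have b2 := qm_half (R := R') hepi e' he' Fl h0 hmono hFl' hex
  obtain ⟨P, hP⟩ := qm_swap (R := R) (R' := R') (S := S) (A := A)
  obtain ⟨Q, hQ⟩ := qm_swap (R := R') (R' := R) (S := S) (A := A)
  have bQ : Function.Bijective Q := by
    refine Function.bijective_iff_has_inverse.2 ⟨P, ?_, ?_⟩
    · exact qm_ext (P.comp Q) (AddMonoidHom.id _) (by intro a s t; simp [hP, hQ])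
    · exact qm_ext (Q.comp P) (AddMonoidHom.id _) (by intro a s t; simp [hP, hQ])
  let φ : A →+ S →+ S →+ B :=
    AddMonoidHom.mk' (fun a => AddMonoidHom.mk' (fun s => AddMonoidHom.mk'
      (fun t => mr t (ml s (f a)))
      (by intro x y; rw [map_add]; rfl))
      (by
        intro x y; ext t
        change mr t (ml (x + y) (f a)) = mr t (ml x (f a)) + mr t (ml y (f a))
        rw [← map_add, map_add ml]; rfl))
      (by intro x y; ext s t; simp [map_add])
  obtain ⟨H, hH⟩ := qm_lift (R := R) (R' := R') φ
    (by
      intro r a s t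
      change mr t (ml s (f (r • a))) = mr t (ml (r • s) (f a))
      rw [hfl, Algebra.smul_def, mul_comm, map_mul]; rfl)
    (by
      intro r a s t
      change mr t (ml s (f (r • a))) = mr (r • t) (ml s (f a))
      rw [hfr, hB, Algebra.smul_def, mul_comm, map_mul]; rfl)
  have hH' : ∀ a s t, H ((a ⊗ₜ[R] s) ⊗ₜ[R'] t) = mr t (ml s (f a)) := hH
  have eF : (F : A ⊗[R] S → B) = H ∘ (fun x : A ⊗[R] S => x ⊗ₜ[R'] (1 : S)) := by
    funext x
    induction x with
    | zero => simp
    | tmul a s => simp [hF, hH']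
    | add x y hx hy =>
      simp only [Function.comp_apply] at hx hy ⊢
      rw [map_add, hx, hy, TensorProduct.add_tmul, map_add]
  have eG : (G : A ⊗[R'] S → B) = (H ∘ Q) ∘ (fun x : A ⊗[R'] S => x ⊗ₜ[R] (1 : S)) := by
    funext x
    induction x with
    | zero => simp
    | tmul a s => simp [hG, hH', hQ]
    | add x y hx hy =>
      simp only [Function.comp_apply] at hx hy ⊢
      rw [map_add, hx, hy, TensorProduct.add_tmul, map_add, map_add]
  rw [eF, eG, Function.Bijective.of_comp_iff _ b1, Function.Bijective.of_comp_iff _ b2,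
    Function.Bijective.of_comp_iff _ bQ]

theorem qm_scc {M N A : Type*} {i : SMul M A} {j : SMul N A}
    (h : ∀ (m : M) (n : N) (a : A), m • n • a = n • m • a) : SMulCommClass M N A := ⟨h⟩

theorem quasiFil_neg_mem {R A : Type*} [CommRing R] [AddCommGroup A] (l r : Module R A) (n : ℕ) :
    ∀ a ∈ quasiFil l r n, -a ∈ quasiFil l r n := by
  have h : ∀ (m : Module R A) (s : R) (a : A), ModSMul m s (-a) = - ModSMul m s a :=
    fun m s a => smul_neg s a
  induction n with
  | zero => intro a ha s; rw [h, h, ← neg_sub', ha s, neg_zero]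
  | succ n ih => intro a ha s; rw [h, h, ← neg_sub']; exact ih _ (ha s)

theorem quasiFil_le_succ {R A : Type*} [CommRing R] [AddCommGroup A] (l r : Module R A) (n : ℕ) :
    ∀ a ∈ quasiFil l r n, a ∈ quasiFil l r (n + 1) := by
  induction n with
  | zero => intro a ha s; rw [ha s]; exact quasiFil_zero_mem l r 0
  | succ n ih => intro a ha s; exact ih _ (ha s)

/-- The filtration shifted by one, starting at zero. -/
def quasiFilShift {R A : Type*} [CommRing R] [AddCommGroup A] (l r : Module R A) : ℕ → Set A
  | 0 => {0}
  | n + 1 => quasiFil l r n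

theorem bijective_left_iff_bijective_right_of_flat_epi
    {R S A B : Type*} [CommRing R] [CommRing S] [Algebra R S]
    [Module.Flat R S]
    (hepi : Function.Bijective (LinearMap.mul' R S))
    [AddCommGroup A] (lA rA : Module R A)
    (hA : ∀ (r s : R) (a : A), ModSMul lA r (ModSMul rA s a) = ModSMul rA s (ModSMul lA r a))
    (hAq : IsQuasiModule lA rA)
    [AddCommGroup B] (lB rB : Module S B)
    (hB : ∀ (s t : S) (b : B), ModSMul lB s (ModSMul rB t b) = ModSMul rB t (ModSMul lB s b))
    -- `f : A → B` is a morphism of `R`-`R`-bimodules, where `B` is regarded as an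
    -- `R`-`R`-bimodule by restricting both actions along `algebraMap R S`:
    (f : A →+ B)
    (hfl : ∀ (r : R) (a : A), f (ModSMul lA r a) = ModSMul lB (algebraMap R S r) (f a))
    (hfr : ∀ (r : R) (a : A), f (ModSMul rA r a) = ModSMul rB (algebraMap R S r) (f a))
    -- the induced map `S ⊗[R] A → B`, `s ⊗ a ↦ s · f a`:
    (F : (@TensorProduct R _ S A _ _ _ lA) →+ B)
    (hF : ∀ (s : S) (a : A),
      F (@TensorProduct.tmul R _ S A _ _ _ lA s a) = ModSMul lB s (f a))
    -- the induced map `A ⊗[R] S → B`, `a ⊗ s ↦ f a · s`: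
    (G : (@TensorProduct R _ A S _ _ rA _) →+ B)
    (hG : ∀ (a : A) (s : S),
      G (@TensorProduct.tmul R _ A S _ _ rA _ a s) = ModSMul rB s (f a)) :
    Function.Bijective F ↔ Function.Bijective G := by
  have hepi' : ∀ s : S, TensorProduct.tmul R (1 : S) s = TensorProduct.tmul R s (1 : S) := by
    intro s
    apply hepi.1
    simp
  let c := @TensorProduct.comm R _ A S _ _ lA _
  have key := @qm_main R R S A B _ _ _ _ _ _ _ hepi' hepi' _ lA rA
    (qm_scc hA)
    (qm_scc fun r s a => (hA s r a).symm)
    id (fun _ => rfl) id (fun _ => rfl)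
    (quasiFilShift lA rA) (fun a ha => ha)
    (monotone_nat_of_le_succ (by
      intro n
      cases n with
      | zero => rintro a rfl; exact quasiFil_zero_mem lA rA 0
      | succ n => exact quasiFil_le_succ lA rA n))
    (by
      intro n a ha r
      cases n with
      | zero => exact ha r
      | succ n => exact ha r)
    (by
      intro n a ha r
      change ModSMul rA r a - ModSMul lA r a ∈ _
      rw [← neg_sub]
      cases n with
      | zero => exact neg_eq_zero.2 (ha r)
      | succ n => exact quasiFil_neg_mem lA rA n _ (ha r))
    (fun a => by obtain ⟨n, hn⟩ := hAq a; exact ⟨n + 1, hn⟩)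
    _ (@Module.toAddMonoidEnd S B _ _ lB) (@Module.toAddMonoidEnd S B _ _ rB)
    hB f hfl hfr (F.comp c.toLinearMap.toAddMonoidHom) (fun a s => hF s a) G hG
  rw [← key]
  change _ ↔ Function.Bijective (F ∘ c)
  exact (Function.Bijective.of_comp_iff F c.bijective).symm
end

section
/- Let A be an additive category in which every morphism has a kernel and a cokernel, let B be an abelian category, and let Θ : A → B be an additive functor that is conservative (reflects isomorphisms) and preserves kernels and cokernels. Then A is an abelian category. -/
/-!
STATEMENT 4.  Let `A` be an additive category (a preadditive category with finite biproducts)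
in which every morphism has a kernel and a cokernel, let `B` be an abelian category, and let
`Θ : A ⥤ B` be an additive functor that is conservative and preserves kernels and cokernels.
Then `A` is an abelian category (with its given additive structure).
-/

open CategoryTheory Limits

theorem abelian_of_conservative_exact_functor
    {A : Type*} {B : Type*} [Category A] [Category B]
    [instA : Preadditive A] [HasFiniteBiproducts A] [HasKernels A] [HasCokernels A]
    [Abelian B]
    (Θ : A ⥤ B) [Θ.Additive] [Θ.ReflectsIsomorphisms]
    (hker : ∀ {X Y : A} (f : X ⟶ Y), PreservesLimit (parallelPair f 0) Θ)
    (hcoker : ∀ {X Y : A} (f : X ⟶ Y), PreservesColimit (parallelPair f 0) Θ) :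
    ∃ ab : Abelian A, ab.toPreadditive = instA := by
  have hiso : ∀ {X Y : A} (f : X ⟶ Y), IsIso (Abelian.coimageImageComparison f) := by
    intro X Y f
    have h1 := @hker
    have h2 := @hcoker
    have : IsIso (Θ.map (Abelian.coimageImageComparison f)) := by
      rw [Arrow.isIso_iff_isIso_of_isIso
        (Abelian.PreservesCoimageImageComparison.iso Θ f).hom]
      infer_instance
    exact isIso_of_reflects_iso _ Θ
  have : HasFiniteProducts A := inferInstance
  exact ⟨Abelian.ofCoimageImageComparisonIsIso, rfl⟩
end

section
/- Let 𝒜 be an abelian category and T : 𝒜 → 𝒜 an additive auto-equivalence. Suppose given morphisms f : A → B and g : B → C in 𝒜, short exact sequences 0 → T(A) → X → A → 0, 0 → T(B) → Y → B → 0 and 0 → T(C) → Z → C → 0, and morphisms X → Y and Y → Z such that 0 → X → Y → Z → 0 is a short exact sequence and the resulting three-by-three diagram commutes, where the top row consists of T(f) : T(A) → T(B) and T(g) : T(B) → T(C) and the bottom row consists of f and g. Then 0 → A → B → C → 0 is a short exact sequence (and hence so is 0 → T(A) → T(B) → T(C) → 0). -/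
/-!
STATEMENT 5.  Let `𝒜` be an abelian category and `T : 𝒜 ⥤ 𝒜` an additive auto-equivalence.
Given `f : A ⟶ B`, `g : B ⟶ C`, short exact sequences `0 → T(A) → X → A → 0`,
`0 → T(B) → Y → B → 0`, `0 → T(C) → Z → C → 0`, and morphisms `X ⟶ Y`, `Y ⟶ Z` such that
`0 → X → Y → Z → 0` is a short exact sequence and the resulting three-by-three diagram
(with top row `T(f)`, `T(g)` and bottom row `f`, `g`) commutes, then `0 → A → B → C → 0`
is a short exact sequence (and hence so is `0 → T(A) → T(B) → T(C) → 0`).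
-/

open CategoryTheory Limits

theorem shortExact_of_three_by_three
    {𝒜 : Type*} [Category 𝒜] [Abelian 𝒜]
    (T : 𝒜 ⥤ 𝒜) [T.Additive] [T.IsEquivalence]
    {A B C X Y Z : 𝒜} (f : A ⟶ B) (g : B ⟶ C)
    (iA : T.obj A ⟶ X) (pA : X ⟶ A) (wA : iA ≫ pA = 0)
    (hA : (ShortComplex.mk iA pA wA).ShortExact)
    (iB : T.obj B ⟶ Y) (pB : Y ⟶ B) (wB : iB ≫ pB = 0)
    (hB : (ShortComplex.mk iB pB wB).ShortExact)
    (iC : T.obj C ⟶ Z) (pC : Z ⟶ C) (wC : iC ≫ pC = 0)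
    (hC : (ShortComplex.mk iC pC wC).ShortExact)
    (u : X ⟶ Y) (v : Y ⟶ Z) (wM : u ≫ v = 0)
    (hM : (ShortComplex.mk u v wM).ShortExact)
    (sq₁ : T.map f ≫ iB = iA ≫ u) (sq₂ : T.map g ≫ iC = iB ≫ v)
    (sq₃ : pA ≫ f = u ≫ pB) (sq₄ : pB ≫ g = v ≫ pC) :
    (∃ w : f ≫ g = 0, (ShortComplex.mk f g w).ShortExact) ∧
      (∃ w' : T.map f ≫ T.map g = 0,
        (ShortComplex.mk (T.map f) (T.map g) w').ShortExact) := by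
  have := hA.mono_f
  have := hB.mono_f
  have := hC.mono_f
  have := hM.mono_f
  have := hA.epi_g
  have := hB.epi_g
  have := hC.epi_g
  have := hM.epi_g
  dsimp at *
  have w : f ≫ g = 0 := by
    rw [← cancel_epi pA, reassoc_of% sq₃, sq₄, reassoc_of% wM]
    simp
  have hTf : Mono (T.map f) := by
    have : Mono (T.map f ≫ iB) := by rw [sq₁]; infer_instance
    exact mono_of_mono _ iB
  have hf : Mono f := T.mono_of_mono_map hTf
  have hg : Epi g := by
    have : Epi (pB ≫ g) := by rw [sq₄]; infer_instance
    exact epi_of_epi pB _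
  have hS : (ShortComplex.mk f g w).ShortExact := by
    refine { exact := ?_, mono_f := hf, epi_g := hg }
    rw [ShortComplex.exact_iff_exact_up_to_refinements]
    intro S b hb
    dsimp at b hb ⊢
    obtain ⟨S₁, π₁, _, y, hy⟩ := surjective_up_to_refinements_of_epi pB b
    obtain ⟨S₂, π₂, _, c, hc⟩ := hC.exact.exact_up_to_refinements (y ≫ v) (by
      dsimp
      rw [Category.assoc, ← sq₄, ← reassoc_of% hy, hb, comp_zero])
    obtain ⟨S₃, π₃, _, b', hb'⟩ := surjective_up_to_refinements_of_epi (T.map g) c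
    dsimp at c hc
    obtain ⟨S₄, π₄, _, x, hx⟩ := hM.exact.exact_up_to_refinements
      (π₃ ≫ π₂ ≫ y - b' ≫ iB) (by
        dsimp
        rw [Preadditive.sub_comp, Category.assoc, Category.assoc, Category.assoc, hc, ← sq₂,
          reassoc_of% hb', sub_self])
    dsimp at x hx
    refine ⟨S₄, π₄ ≫ π₃ ≫ π₂ ≫ π₁, inferInstance, x ≫ pA, ?_⟩
    rw [Category.assoc x, sq₃, ← reassoc_of% hx]
    simp [Preadditive.sub_comp, wB, hy]
  exact ⟨⟨w, hS⟩, ⟨by rw [← T.map_comp, w, T.map_zero], hS.map_of_exact T⟩⟩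
end

section
/- Let 𝒜 be an abelian category with all set-indexed products and enough projective objects. Then products of short exact sequences in 𝒜 are exact: for every family of short exact sequences 0 → X_i → Y_i → Z_i → 0 in 𝒜 indexed by a set, the product sequence 0 → ∏ X_i → ∏ Y_i → ∏ Z_i → 0 is a short exact sequence. -/
/-!
STATEMENT 6.  Let `𝒜` be an abelian category with all set-indexed products and enough
projective objects.  Then products of short exact sequences in `𝒜` are exact: for every
family of short exact sequences `0 → Xᵢ → Yᵢ → Zᵢ → 0` indexed by a set `I`, the product
sequence `0 → ∏ Xᵢ → ∏ Yᵢ → ∏ Zᵢ → 0` is a short exact sequence.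
-/

open CategoryTheory Limits

universe w v u

theorem product_shortExact_of_enoughProjectives
    {𝒜 : Type u} [Category.{v} 𝒜] [Abelian 𝒜]
    [HasProducts.{w} 𝒜] [EnoughProjectives 𝒜]
    {I : Type w} (X Y Z : I → 𝒜)
    (f : ∀ i, X i ⟶ Y i) (g : ∀ i, Y i ⟶ Z i)
    (w₀ : ∀ i, f i ≫ g i = 0)
    (h : ∀ i, (ShortComplex.mk (f i) (g i) (w₀ i)).ShortExact) :
    ∃ w' : Limits.Pi.map f ≫ Limits.Pi.map g = 0,
      (ShortComplex.mk (Limits.Pi.map f) (Limits.Pi.map g) w').ShortExact := by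
  have w' : Limits.Pi.map f ≫ Limits.Pi.map g = 0 := by
    apply Limits.Pi.hom_ext
    intro i
    simp [w₀]
  have hmono : ∀ i, Mono (f i) := fun i => (h i).mono_f
  have hepi : ∀ i, Epi (g i) := fun i => (h i).epi_g
  have hm : Mono (Limits.Pi.map f) := inferInstance
  -- the product map is an epimorphism: lift a projective cover componentwise
  have he : Epi (Limits.Pi.map g) := by
    have fac : Pi.lift (fun i => Projective.factorThru
        (Projective.π (∏ᶜ Z) ≫ Pi.π Z i) (g i)) ≫ Limits.Pi.map g
          = Projective.π (∏ᶜ Z) := by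
      apply Limits.Pi.hom_ext
      intro i
      simp
    exact epi_of_epi_fac fac
  refine ⟨w', ?_⟩
  have hex : (ShortComplex.mk (Limits.Pi.map f) (Limits.Pi.map g) w').Exact := by
    apply ShortComplex.exact_of_f_is_kernel
    have key : ∀ {T : 𝒜} (k : T ⟶ ∏ᶜ Y), k ≫ Limits.Pi.map g = 0 →
        ∀ i, (k ≫ Pi.π Y i) ≫ g i = 0 := by
      intro T k hk i
      have := congrArg (fun t => t ≫ Pi.π Z i) hk
      simpa using this
    refine KernelFork.IsLimit.ofι' _ _ (fun {T} k hk =>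
      ⟨Pi.lift (fun i => (h i).exact.lift (k ≫ Pi.π Y i) (key k hk i)), ?_⟩)
    apply Limits.Pi.hom_ext
    intro i
    have := (h i).exact.lift_f (k ≫ Pi.π Y i) (key k hk i)
    simpa using this
  exact { exact := hex, mono_f := hm, epi_g := he }
end

section
/- Let 𝒜 be an abelian category and let 0 → A → B → C → 0 be a short exact sequence of cochain complexes over 𝒜, given by chain maps f : A → B and g : B → C such that 0 → Aⁿ → Bⁿ → Cⁿ → 0 is exact in 𝒜 for every n. Let φ : Cone(f) → C be the chain map induced by g (well defined since g∘f = 0), so that Cone(φ) is, up to shift, the totalization of the three-term complex of complexes A → B → C. If J is a cochain complex over 𝒜 all of whose components Jⁿ are injective objects of 𝒜, then every chain map Cone(φ) → J is homotopic to zero. -/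
/-!
STATEMENT 7.  Let `𝒜` be an abelian category and let `0 → A → B → C → 0` be a short exact
sequence of cochain complexes over `𝒜` (given by chain maps `f : A ⟶ B`, `g : B ⟶ C` which
are degreewise short exact).  Let `φ : Cone(f) ⟶ C` be the chain map induced by `g`
(characterized by `inr f ≫ φ = g` and the vanishing of its component along `inl f`), so
that `Cone(φ)` is, up to shift, the totalization of the three-term complex of complexes
`A → B → C`.  If `J` is a cochain complex all of whose components are injective objects
of `𝒜`, then every chain map `Cone(φ) ⟶ J` is homotopic to zero.
-/

open CategoryTheory Limits CochainComplex CochainComplex.HomComplex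

theorem homotopic_zero_of_termwise_injective_target
    {𝒜 : Type*} [Category 𝒜] [Abelian 𝒜]
    {A B C : CochainComplex 𝒜 ℤ} (f : A ⟶ B) (g : B ⟶ C)
    (w : ∀ n : ℤ, f.f n ≫ g.f n = 0)
    (hses : ∀ n : ℤ, (ShortComplex.mk (f.f n) (g.f n) (w n)).ShortExact)
    (φ : mappingCone f ⟶ C)
    (hφ₁ : mappingCone.inr f ≫ φ = g)
    (hφ₂ : (mappingCone.inl f).comp (Cochain.ofHom φ) (add_zero (-1)) = 0)
    (J : CochainComplex 𝒜 ℤ) (hJ : ∀ n : ℤ, Injective (J.X n))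
    (u : mappingCone φ ⟶ J) :
    Nonempty (Homotopy u 0) := by
  -- the component of `u` along `inl φ`
  let U : Cochain (mappingCone f) J (-1) :=
    (mappingCone.inl φ).comp (Cochain.ofHom u) (add_zero (-1))
  let a : Cochain A J (-2) := (mappingCone.inl f).comp U (by lia)
  have hδU : δ (-1) 0 U = (Cochain.ofHom φ).comp
      (Cochain.ofHom (mappingCone.inr φ ≫ u)) (zero_add 0) := by
    dsimp only [U]
    rw [δ_comp_zero_cochain _ _ 0 (by lia), δ_ofHom, Cochain.comp_zero, zero_add,
      mappingCone.δ_inl, ← Cochain.ofHom_comp, ← Cochain.ofHom_comp, Category.assoc]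
  -- extend `-a` along the degreewise monomorphism `f`
  obtain ⟨β, hβ⟩ : ∃ β : Cochain B J (-2),
      (Cochain.ofHom f).comp β (zero_add (-2)) = -a := by
    have (n : ℤ) : Mono (f.f n) := (hses n).mono_f
    refine ⟨Cochain.mk (fun p q hpq => Injective.factorThru (-a.v p q hpq) (f.f p)), ?_⟩
    ext p q hpq
    simp
  let γ₁ : Cochain (mappingCone f) J (-2) :=
    mappingCone.descCochain f (0 : Cochain A J (-3)) β (by lia)
  let V : Cochain (mappingCone f) J (-1) := U - δ (-2) (-1) γ₁
  have hinlV : (mappingCone.inl f).comp V (show -1 + -1 = -2 by lia) = 0 := by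
    dsimp only [V, γ₁]
    rw [mappingCone.δ_descCochain _ _ _ _ (-1) (by lia), Cochain.comp_sub, hβ]
    simp [a]
  have hδV : δ (-1) 0 V = (Cochain.ofHom φ).comp
      (Cochain.ofHom (mappingCone.inr φ ≫ u)) (zero_add 0) := by
    dsimp only [V]
    rw [δ_sub, δ_δ, sub_zero, hδU]
  have hfV : (Cochain.ofHom (f ≫ mappingCone.inr f)).comp V (zero_add (-1)) = 0 := by
    have h := δ_comp (mappingCone.inl f) V (show -1 + -1 = -2 by lia) 0 0 (-1)
      (by lia) (by lia) (by lia)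
    rw [hinlV, δ_zero, hδV, mappingCone.δ_inl,
      ← Cochain.comp_assoc_of_second_is_zero_cochain, hφ₂, Cochain.zero_comp, zero_add] at h
    simpa using h.symm
  have hg (n : ℤ) : (mappingCone.inr f).f n ≫ φ.f n = g.f n := by
    rw [← HomologicalComplex.comp_f, hφ₁]
  -- descend `V` along `φ`
  obtain ⟨γ₂, hγ₂⟩ : ∃ γ₂ : Cochain C J (-1),
      (Cochain.ofHom φ).comp γ₂ (zero_add (-1)) = V := by
    have key (p q : ℤ) (hpq : p + (-1) = q) :
        ∃ k : C.X p ⟶ J.X q, g.f p ≫ k = (mappingCone.inr f).f p ≫ V.v p q hpq := by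
      have := (hses p).epi_g
      have h0 : f.f p ≫ (mappingCone.inr f).f p ≫ V.v p q hpq = 0 := by
        simpa using Cochain.congr_v hfV p q hpq
      exact ⟨(hses p).exact.desc _ h0, (hses p).exact.g_desc _ h0⟩
    choose k hk using key
    refine ⟨Cochain.mk k, ?_⟩
    ext p q hpq
    rw [Cochain.zero_cochain_comp_v, Cochain.ofHom_v, Cochain.mk_v,
      mappingCone.ext_from_iff f (p + 1) p rfl]
    constructor
    · have h1 := Cochain.congr_v hφ₂ (p + 1) p (by omega)
      have h2 := Cochain.congr_v hinlV (p + 1) q (by omega)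
      rw [Cochain.comp_v _ _ _ (p + 1) p q (by omega) hpq] at h2
      rw [Cochain.comp_zero_cochain_v, Cochain.ofHom_v, Cochain.zero_v] at h1
      rw [h2, ← Category.assoc, h1, zero_comp, Cochain.zero_v]
    · rw [← hk, ← Category.assoc, hg]
  refine ⟨mappingCone.descHomotopy φ u 0 γ₁ γ₂ ?_ ?_⟩
  · rw [hγ₂]
    simp [V, U]
  · have h : (Cochain.ofHom φ).comp (δ (-1) 0 γ₂) (zero_add 0) = (Cochain.ofHom φ).comp
        (Cochain.ofHom (mappingCone.inr φ ≫ u)) (zero_add 0) := by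
      rw [← hδV, ← hγ₂, δ_zero_cochain_comp _ _ 0 (by lia), δ_ofHom]
      simp
    rw [comp_zero, Cochain.ofHom_zero, add_zero]
    ext p
    have := (hses p).epi_g
    have hp := Cochain.congr_v h p p (add_zero p)
    rw [Cochain.zero_cochain_comp_v, Cochain.zero_cochain_comp_v, Cochain.ofHom_v] at hp
    have : Epi (φ.f p) := by
      have : Epi ((mappingCone.inr f).f p ≫ φ.f p) := by rw [hg]; exact (hses p).epi_g
      exact epi_of_epi ((mappingCone.inr f).f p) _
    exact ((cancel_epi (φ.f p)).1 hp).symm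
end

section
/- Let 𝒜 be an abelian category and let 0 → A → B → C → 0 be a short exact sequence of cochain complexes over 𝒜, given by chain maps f : A → B and g : B → C such that 0 → Aⁿ → Bⁿ → Cⁿ → 0 is exact in 𝒜 for every n. Let φ : Cone(f) → C be the chain map induced by g (well defined since g∘f = 0), so that Cone(φ) is, up to shift, the totalization of the three-term complex of complexes A → B → C. If P is a cochain complex over 𝒜 all of whose components Pⁿ are projective objects of 𝒜, then every chain map P → Cone(φ) is homotopic to zero. -/
/-!
STATEMENT 8.  Let `𝒜` be an abelian category and let `0 → A → B → C → 0` be a short exact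
sequence of cochain complexes over `𝒜` (given by chain maps `f : A ⟶ B`, `g : B ⟶ C` which
are degreewise short exact).  Let `φ : Cone(f) ⟶ C` be the chain map induced by `g`
(characterized by `inr f ≫ φ = g` and the vanishing of its component along `inl f`), so
that `Cone(φ)` is, up to shift, the totalization of the three-term complex of complexes
`A → B → C`.  If `P` is a cochain complex all of whose components are projective objects
of `𝒜`, then every chain map `P ⟶ Cone(φ)` is homotopic to zero.
-/

open CategoryTheory Limits CochainComplex CochainComplex.HomComplex

/-- Cochains out of a termwise projective complex lift along a degreewise epimorphism. -/
lemma exists_cochain_lift_of_epi {𝒜 : Type*} [Category 𝒜] [Abelian 𝒜]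
    {P B C : CochainComplex 𝒜 ℤ} (hP : ∀ n : ℤ, Projective (P.X n)) (g : B ⟶ C)
    (hg : ∀ n, Epi (g.f n)) {n : ℤ} (z : Cochain P C n) :
    ∃ b : Cochain P B n, b.comp (Cochain.ofHom g) (add_zero n) = z := by
  refine ⟨Cochain.mk (fun p q hpq => Projective.factorThru (z.v p q hpq) (g.f q)), ?_⟩
  ext p q hpq
  simp

/-- Cochains killed by `g` lift along `f`, for a degreewise short exact sequence. -/
lemma exists_cochain_lift_of_exact {𝒜 : Type*} [Category 𝒜] [Abelian 𝒜]
    {P A B C : CochainComplex 𝒜 ℤ} (f : A ⟶ B) (g : B ⟶ C)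
    (w : ∀ n : ℤ, f.f n ≫ g.f n = 0)
    (hses : ∀ n : ℤ, (ShortComplex.mk (f.f n) (g.f n) (w n)).ShortExact)
    {n : ℤ} (z : Cochain P B n) (hz : z.comp (Cochain.ofHom g) (add_zero n) = 0) :
    ∃ a : Cochain P A n, a.comp (Cochain.ofHom f) (add_zero n) = z := by
  have h (p q : ℤ) (hpq : p + n = q) : ∃ l : P.X p ⟶ A.X q, l ≫ f.f q = z.v p q hpq := by
    have := (hses q).mono_f
    have h0 : z.v p q hpq ≫ g.f q = 0 := by
      simpa using Cochain.congr_v hz p q hpq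
    exact ⟨(hses q).exact.lift _ h0, (hses q).exact.lift_f _ h0⟩
  choose l hl using h
  refine ⟨Cochain.mk l, ?_⟩
  ext p q hpq
  simp [hl]

/-- Postcomposition with a degreewise monomorphism is injective on cochains. -/
lemma cochain_eq_of_comp_mono {𝒜 : Type*} [Category 𝒜] [Abelian 𝒜]
    {P A B : CochainComplex 𝒜 ℤ} (f : A ⟶ B) (hf : ∀ n, Mono (f.f n))
    {n : ℤ} (z z' : Cochain P A n)
    (h : z.comp (Cochain.ofHom f) (add_zero n) = z'.comp (Cochain.ofHom f) (add_zero n)) :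
    z = z' := by
  ext p q hpq
  rw [← cancel_mono (f.f q)]
  simpa using Cochain.congr_v h p q hpq

theorem homotopic_zero_of_termwise_projective_source
    {𝒜 : Type*} [Category 𝒜] [Abelian 𝒜]
    {A B C : CochainComplex 𝒜 ℤ} (f : A ⟶ B) (g : B ⟶ C)
    (w : ∀ n : ℤ, f.f n ≫ g.f n = 0)
    (hses : ∀ n : ℤ, (ShortComplex.mk (f.f n) (g.f n) (w n)).ShortExact)
    (φ : mappingCone f ⟶ C)
    (hφ₁ : mappingCone.inr f ≫ φ = g)
    (hφ₂ : (mappingCone.inl f).comp (Cochain.ofHom φ) (add_zero (-1)) = 0)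
    (P : CochainComplex 𝒜 ℤ) (hP : ∀ n : ℤ, Projective (P.X n))
    (u : P ⟶ mappingCone φ) :
    Nonempty (Homotopy u 0) := by
  have hφ : Cochain.ofHom φ = (mappingCone.snd f).comp (Cochain.ofHom g) (add_zero 0) := by
    rw [mappingCone.ext_cochain_from_iff f (-1) 0 (by lia)]
    refine ⟨by simp [hφ₂], ?_⟩
    rw [← Cochain.ofHom_comp, hφ₁]
    simp
  obtain ⟨x, hx⟩ : ∃ x, x = (Cochain.ofHom u).comp (mappingCone.fst φ).1 (zero_add 1) := ⟨_, rfl⟩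
  obtain ⟨γ, hγ⟩ : ∃ γ, γ = (Cochain.ofHom u).comp (mappingCone.snd φ) (zero_add 0) := ⟨_, rfl⟩
  obtain ⟨α, hα⟩ : ∃ α, α = x.comp (mappingCone.fst f).1 (show (1 : ℤ) + 1 = 2 by rfl) := ⟨_, rfl⟩
  obtain ⟨β, hβ⟩ : ∃ β, β = x.comp (mappingCone.snd f) (add_zero 1) := ⟨_, rfl⟩
  have hδx : δ 1 2 x = 0 := by
    rw [hx, δ_zero_cochain_comp _ _ _ (by rfl)]
    simp
  have hδγ : δ 0 1 γ = -β.comp (Cochain.ofHom g) (add_zero 1) := by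
    rw [hγ, δ_comp_zero_cochain _ _ _ (zero_add 1), hβ, hx]
    simp [hφ]
  have hδβ : δ 1 2 β = -α.comp (Cochain.ofHom f) (add_zero 2) := by
    rw [hβ, δ_comp_zero_cochain _ _ _ (by rfl), hδx, hα]
    simp
  obtain ⟨b, hb⟩ := exists_cochain_lift_of_epi hP g (fun n => (hses n).epi_g) γ
  obtain ⟨a, ha⟩ := exists_cochain_lift_of_exact f g w hses (-(β + δ 0 1 b)) (by
    have := hδγ
    rw [← hb, δ_comp_ofHom] at this
    simp [this])
  have hδa : δ 1 2 a = α := by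
    apply cochain_eq_of_comp_mono f (fun n => (hses n).mono_f)
    rw [← δ_comp_ofHom, ha]
    simp [hδβ, δ_δ]
  refine ⟨mappingCone.liftHomotopy φ u 0 (mappingCone.liftCochain f a b (zero_add 1)) 0 ?_ ?_⟩
  · rw [← hx, mappingCone.δ_liftCochain f a b (zero_add 1) 2 (by rfl), hδa, ha,
      mappingCone.ext_cochain_to_iff f 1 2 (by rfl), ← hα, ← hβ]
    simp
  · rw [← hγ, hφ, ← Cochain.comp_assoc_of_second_is_zero_cochain, mappingCone.liftCochain_snd, hb]
    simp
end

section
/- Let T be a triangulated category with set-indexed products and let M and N be classes of objects of T closed under products. Then the class M * N, consisting of all objects X for which there exists a distinguished triangle M → X → N → M[1] with M ∈ M and N ∈ N, is closed under products in T. Moreover, if M is closed under shifts in both directions and under finite direct sums, then for every n ≥ 1 the class ⟨M⟩ₙ of all direct summands of objects of the n-fold star product M * M * ⋯ * M is closed under products in T. -/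
/-!
STATEMENT 14.  Let `T` be a triangulated category with set-indexed products and let `M`, `N`
be classes of objects of `T` closed under products.  Then the class `M * N` (objects `X`
fitting into a distinguished triangle `M → X → N → M⟦1⟧` with `M ∈ M`, `N ∈ N`) is closed
under products.  Moreover, if `M` is closed under shifts in both directions and under finite
direct sums, then for every `n ≥ 1` the class `⟨M⟩ₙ` of direct summands of objects of the
`n`-fold star product `M * ⋯ * M` is closed under products.

Below `starPow M k` denotes the `(k+1)`-fold star product `M^{*(k+1)}`, so that quantifying
over all `k : ℕ` corresponds to quantifying over all `n = k + 1 ≥ 1`.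
-/

open CategoryTheory Limits Pretriangulated

universe w v u

variable {C : Type u} [Category.{v} C] [HasZeroObject C] [HasShift C ℤ] [Preadditive C]
  [∀ n : ℤ, (shiftFunctor C n).Additive] [Pretriangulated C]

/-- The star product `M * N` of two classes of objects of a pretriangulated category:
the class of objects `X` for which there is a distinguished triangle `m ⟶ X ⟶ n ⟶ m⟦1⟧`
with `m ∈ M` and `n ∈ N`. -/
def starProduct (M N : C → Prop) : C → Prop := fun X =>
  ∃ (m n : C), M m ∧ N n ∧ ∃ (f : m ⟶ X) (g : X ⟶ n) (h : n ⟶ m⟦(1 : ℤ)⟧),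
    Triangle.mk f g h ∈ distTriang C

/-- `starPow M k` is the `(k+1)`-fold star product `M * M * ⋯ * M`. -/
def starPow (M : C → Prop) : ℕ → (C → Prop)
  | 0 => M
  | k + 1 => starProduct M (starPow M k)

/-- The class of direct summands (retracts) of objects belonging to `P`. -/
def summandClosure (P : C → Prop) : C → Prop := fun X =>
  ∃ (W : C), P W ∧ ∃ (i : X ⟶ W) (r : W ⟶ X), i ≫ r = 𝟙 X

theorem starProduct_prod_aux [HasProducts.{w} C]
    (M N : C → Prop)
    (hM : ∀ (I : Type w) (A : I → C), (∀ i, M (A i)) → M (∏ᶜ A))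
    (hN : ∀ (I : Type w) (A : I → C), (∀ i, N (A i)) → N (∏ᶜ A))
    (I : Type w) (A : I → C) (hA : ∀ i, starProduct M N (A i)) :
    starProduct M N (∏ᶜ A) := by
  choose m n hm hn f g h hT using hA
  have := productTriangle_distinguished (fun i => Triangle.mk (f i) (g i) (h i)) hT
  exact ⟨∏ᶜ m, ∏ᶜ n, hM I m hm, hN I n hn, _, _, _, this⟩

theorem starPow_prod_aux [HasProducts.{w} C]
    (M : C → Prop)
    (hM : ∀ (I : Type w) (A : I → C), (∀ i, M (A i)) → M (∏ᶜ A)) (k : ℕ) :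
    ∀ (I : Type w) (A : I → C), (∀ i, starPow M k (A i)) → starPow M k (∏ᶜ A) := by
  induction k with
  | zero => exact hM
  | succ k ih => exact starProduct_prod_aux M (starPow M k) hM ih

theorem starProduct_closed_under_products
    [HasProducts.{w} C] [HasFiniteBiproducts C]
    (M N : C → Prop)
    (hM : ∀ (I : Type w) (A : I → C), (∀ i, M (A i)) → M (∏ᶜ A))
    (hN : ∀ (I : Type w) (A : I → C), (∀ i, N (A i)) → N (∏ᶜ A)) :
    (∀ (I : Type w) (A : I → C),
      (∀ i, starProduct M N (A i)) → starProduct M N (∏ᶜ A)) ∧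
    ((∀ (X : C) (n : ℤ), M X → M (X⟦n⟧)) →
      (∀ (k : ℕ) (y : Fin k → C), (∀ i, M (y i)) → M (biproduct y)) →
      ∀ (n : ℕ) (I : Type w) (A : I → C),
        (∀ i, summandClosure (starPow M n) (A i)) →
          summandClosure (starPow M n) (∏ᶜ A)) := by
  refine ⟨starProduct_prod_aux M N hM hN, fun _ _ k I A hA => ?_⟩
  choose W hW i r hir using hA
  refine ⟨∏ᶜ W, starPow_prod_aux M hM k I W hW, Limits.Pi.map i, Limits.Pi.map r, ?_⟩
  apply Limits.Pi.hom_ext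
  intro b
  simp [hir]
end

section
/- Let 𝒜 be an additive category with set-indexed coproducts and let j : S → T and k : T → R be composable morphisms such that k is a cokernel of j. If S and R are compact objects of 𝒜, then T is a compact object of 𝒜. In particular (the case R = 0), if there is an epimorphism from a compact object S onto an object T, then T is compact. -/
/-!
STATEMENT 15.  Let `𝒜` be an additive category with set-indexed coproducts and let
`j : S ⟶ T` and `k : T ⟶ R` be composable morphisms such that `k` is a cokernel of `j`.
If `S` and `R` are compact, then `T` is compact.  In particular (the case `R = 0`), if
there is an epimorphism from a compact object `S` onto an object `T`, then `T` is compact.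

Compactness of `s`: for every family `(Aᵢ)` the canonical map
`⊕ᵢ Hom(s, Aᵢ) → Hom(s, ∐ᵢ Aᵢ)` is bijective.
-/

open CategoryTheory Limits

universe w v u

/-- The canonical map `⊕ᵢ Hom(s, Aᵢ) →+ Hom(s, ∐ᵢ Aᵢ)`. -/
noncomputable def coproductComparison {C : Type u} [Category.{v} C] [Preadditive C]
    (s : C) {I : Type w} (A : I → C) [HasCoproduct A] :
    (DirectSum I (fun i => s ⟶ A i)) →+ (s ⟶ ∐ A) :=
  letI := Classical.decEq I
  DirectSum.toAddMonoid (fun i =>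
    AddMonoidHom.mk' (fun f => f ≫ Sigma.ι A i) (fun f g => by
      simp [Preadditive.add_comp]))

/-- An object `s` of a preadditive category is compact if, for every set-indexed family of
objects `(Aᵢ)` admitting a coproduct, the canonical map `⊕ᵢ Hom(s, Aᵢ) → Hom(s, ∐ᵢ Aᵢ)` is
bijective. -/
def IsCompactObj.{w', v', u'} {C : Type u'} [Category.{v'} C] [Preadditive C] (s : C) : Prop :=
  ∀ {I : Type w'} (A : I → C) [HasCoproduct A], Function.Bijective (coproductComparison s A)

section Helpers

open scoped Classical in
/-- The projection from the coproduct to the `i`-th summand. -/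
noncomputable def coprodProj {C : Type u} [Category.{v} C] [Preadditive C]
    {I : Type w} (A : I → C) [HasCoproduct A] (i : I) : ∐ A ⟶ A i :=
  Sigma.desc (fun k => if h : k = i then eqToHom (by rw [h]) else 0)

variable {C : Type u} [Category.{v} C] [Preadditive C]
    {I : Type w} (A : I → C) [HasCoproduct A]

lemma ι_coprodProj_self (i : I) : Sigma.ι A i ≫ coprodProj A i = 𝟙 _ := by
  simp [coprodProj]

lemma ι_coprodProj_ne {i k : I} (h : k ≠ i) : Sigma.ι A k ≫ coprodProj A i = 0 := by
  simp [coprodProj, h]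

lemma comparison_of [DecidableEq I] (s : C) (i : I) (f : s ⟶ A i) :
    coproductComparison s A (DirectSum.of (fun i => s ⟶ A i) i f) = f ≫ Sigma.ι A i := by
  unfold coproductComparison
  rw [Subsingleton.elim (Classical.decEq I) ‹DecidableEq I›]
  simp

lemma comparison_proj (s : C) (x : DirectSum I (fun i => s ⟶ A i)) (i : I) :
    coproductComparison s A x ≫ coprodProj A i = x i := by
  classical
  induction x using DirectSum.induction_on with
  | zero => simp
  | of k f =>
    rw [comparison_of, Category.assoc]
    by_cases h : k = i
    · subst h
      rw [ι_coprodProj_self, Category.comp_id, DirectSum.of_eq_same]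
    · rw [ι_coprodProj_ne A h, comp_zero, DirectSum.of_eq_of_ne _ _ _ (Ne.symm h)]
  | add x y hx hy => rw [map_add, Preadditive.add_comp, hx, hy, DirectSum.add_apply]

lemma comparison_injective (s : C) : Function.Injective (coproductComparison s A) := by
  intro x y h
  refine DFinsupp.ext fun i => ?_
  have h1 := comparison_proj A s x i
  rw [h, comparison_proj] at h1
  exact h1.symm

lemma ι_mem_range (s : C) (i : I) (f : s ⟶ A i) :
    f ≫ Sigma.ι A i ∈ (coproductComparison s A).range := by
  classical
  exact ⟨_, comparison_of A s i f⟩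

lemma comp_mem_range {s t : C} (k : s ⟶ t) (x : DirectSum I (fun i => t ⟶ A i)) :
    k ≫ coproductComparison t A x ∈ (coproductComparison s A).range := by
  classical
  induction x using DirectSum.induction_on with
  | zero => simpa using zero_mem _
  | of i f =>
    rw [comparison_of, ← Category.assoc]
    exact ι_mem_range A s i _
  | add x y hx hy =>
    rw [map_add, Preadditive.comp_add]
    exact add_mem hx hy

lemma exists_finset (s : C) (x : DirectSum I (fun i => s ⟶ A i)) :
    ∃ F : Finset I, ∀ G : Finset I, F ⊆ G →
      coproductComparison s A x ≫ (∑ i ∈ G, coprodProj A i ≫ Sigma.ι A i) =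
        coproductComparison s A x := by
  classical
  induction x using DirectSum.induction_on with
  | zero => exact ⟨∅, by simp⟩
  | of k f =>
    refine ⟨{k}, fun G hG => ?_⟩
    have hk : k ∈ G := hG (Finset.mem_singleton_self k)
    rw [comparison_of, Category.assoc, Preadditive.comp_sum, Finset.sum_eq_single k]
    · rw [← Category.assoc (Sigma.ι A k), ι_coprodProj_self, Category.id_comp]
    · intro b _ hb
      rw [← Category.assoc, ι_coprodProj_ne A (Ne.symm hb), zero_comp]
    · intro h
      exact absurd hk h
  | add x y hx hy =>
    obtain ⟨F, hF⟩ := hx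
    obtain ⟨F', hF'⟩ := hy
    refine ⟨F ∪ F', fun G hG => ?_⟩
    rw [map_add, Preadditive.add_comp, hF G (Finset.union_subset_left hG),
      hF' G (Finset.union_subset_right hG)]

lemma isCompactObj_aux {S T R : C} (j : S ⟶ T) (k : T ⟶ R)
    (hd : ∀ {X : C} (g : T ⟶ X), j ≫ g = 0 → ∃ h : R ⟶ X, k ≫ h = g)
    (hS : IsCompactObj.{w, v, u} S) (hR : IsCompactObj.{w, v, u} R) :
    IsCompactObj.{w, v, u} T := by
  intro I A _
  refine ⟨comparison_injective A T, fun f => ?_⟩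
  obtain ⟨x, hx⟩ := (hS A).2 (j ≫ f)
  obtain ⟨F, hF⟩ := exists_finset A S x
  have h1 := hF F subset_rfl
  rw [hx, Category.assoc] at h1
  obtain ⟨h, hh⟩ := hd (f - f ≫ ∑ i ∈ F, coprodProj A i ≫ Sigma.ι A i)
    (by rw [Preadditive.comp_sub, h1, sub_self])
  obtain ⟨y, rfl⟩ := (hR A).2 h
  have h2 := comp_mem_range A k y
  rw [hh] at h2
  have h3 : f ≫ (∑ i ∈ F, coprodProj A i ≫ Sigma.ι A i) ∈ (coproductComparison T A).range := by
    rw [Preadditive.comp_sum]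
    refine sum_mem fun i _ => ?_
    rw [← Category.assoc]
    exact ι_mem_range A T i _
  have h4 := add_mem h2 h3
  rw [sub_add_cancel] at h4
  exact h4

end Helpers

theorem isCompactObj_of_cokernel
    {C : Type u} [Category.{v} C] [Preadditive C] [HasFiniteBiproducts C]
    [HasCoproducts.{w} C] :
    (∀ {S T R : C} (j : S ⟶ T) (k : T ⟶ R) (hw : j ≫ k = 0),
      Nonempty (IsColimit (CokernelCofork.ofπ k hw)) →
      IsCompactObj.{w, v, u} S → IsCompactObj.{w, v, u} R → IsCompactObj.{w, v, u} T) ∧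
    (∀ {S T : C} (e : S ⟶ T), Epi e →
      IsCompactObj.{w, v, u} S → IsCompactObj.{w, v, u} T) := by
  refine ⟨?_, ?_⟩
  · rintro S T R j k hw ⟨hc⟩ hS hR
    refine isCompactObj_aux j k (fun g hg => ?_) hS hR
    obtain ⟨l, hl⟩ := CokernelCofork.IsColimit.desc' hc g hg
    exact ⟨l, hl⟩
  · intro S T e he hS
    -- `S` itself can play the role of `R`, with the zero map
    refine isCompactObj_aux e (0 : T ⟶ S) (fun g hg => ⟨0, ?_⟩) hS hS
    rw [comp_zero]
    exact ((cancel_epi e).1 (hg.trans comp_zero.symm)).symm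
end

section
/- Let 𝒜 be an abelian category and suppose given a morphism of short exact sequences from 0 → W' → A' → Z' → 0 to 0 → W → A → Z → 0, i.e., morphisms W' → W, A' → A and Z' → Z making both squares commute. If the morphism W' → W is an epimorphism, then the induced morphism A' → A ×_Z Z' to the pullback of A → Z ← Z' is an epimorphism. -/
/-!
STATEMENT 18.  Let `𝒜` be an abelian category and suppose given a morphism of short exact
sequences from `0 → W' → A' → Z' → 0` to `0 → W → A → Z → 0`.  If the morphism `W' → W` is
an epimorphism, then the induced morphism `A' → A ×_Z Z'` to the pullback of `A → Z ← Z'`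
is an epimorphism.
-/

open CategoryTheory Limits

theorem epi_to_pullback_of_epi
    {𝒜 : Type*} [Category 𝒜] [Abelian 𝒜]
    {W' A' Z' W A Z : 𝒜}
    (i' : W' ⟶ A') (p' : A' ⟶ Z') (w' : i' ≫ p' = 0)
    (h' : (ShortComplex.mk i' p' w').ShortExact)
    (i : W ⟶ A) (p : A ⟶ Z) (w : i ≫ p = 0)
    (h : (ShortComplex.mk i p w).ShortExact)
    (α : W' ⟶ W) (β : A' ⟶ A) (γ : Z' ⟶ Z)
    (sq₁ : i' ≫ β = α ≫ i) (sq₂ : p' ≫ γ = β ≫ p)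
    (hα : Epi α) :
    Epi (pullback.lift β p' sq₂.symm : A' ⟶ pullback p γ) := by
  have hp' : Epi p' := h'.epi_g
  rw [epi_iff_surjective_up_to_refinements]
  intro T y
  obtain ⟨T₁, π₁, hπ₁, a, ha⟩ := surjective_up_to_refinements_of_epi p' (y ≫ pullback.snd p γ)
  have hd : (π₁ ≫ y ≫ pullback.fst p γ - a ≫ β) ≫ p = 0 := by
    rw [Preadditive.sub_comp, Category.assoc, Category.assoc, Category.assoc, ← sq₂,
      pullback.condition, ← Category.assoc a, ← ha]
    simp
  obtain ⟨T₂, π₂, hπ₂, b, hb⟩ := h.exact.exact_up_to_refinements _ hd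
  obtain ⟨T₃, π₃, hπ₃, c, hc⟩ := surjective_up_to_refinements_of_epi α b
  dsimp at hb b
  rw [Preadditive.comp_sub, sub_eq_iff_eq_add] at hb
  refine ⟨T₃, π₃ ≫ π₂ ≫ π₁, inferInstance, π₃ ≫ π₂ ≫ a + c ≫ i', ?_⟩
  apply pullback.hom_ext
  · simp only [Category.assoc, pullback.lift_fst, Preadditive.add_comp, sq₁]
    rw [hb, Preadditive.comp_add, ← Category.assoc π₃ b, hc, Category.assoc, add_comm]
  · simp only [Category.assoc, pullback.lift_snd, Preadditive.add_comp, w', ha, comp_zero, add_zero]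
end
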